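/- arXiv:2304.09743 — 3 statements merged into one kernel-verified Lean document; each statement's English description precedes it below -/
import Mathlib

section
/- For every dimension d ≥ 1, every finite set of data points 𝒳 ⊂ ℝ^d, every set 𝒰 of k ≥ 1 distinct centers in ℝ^d, and every assignment π : 𝒳 → 𝒰, there exists a threshold tree T separating 𝒰 such that cost₁(T) ≤ (1 + H_{k−1}) · cost₁(π, 𝒰). In particular, the price of explainability for k-medians is at most 1 + H_{k−1}. -/
/-- A threshold tree in `ℝ^d`: a finite binary tree whose internal nodes are
labelled by threshold cuts `(i, θ)`. -/
inductive ThresholdTree (d : ℕ) : Type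
  | leaf : ThresholdTree d
  | node (i : Fin d) (θ : ℝ) (l r : ThresholdTree d) : ThresholdTree d

namespace ThresholdTree

/-- The list of regions of the leaves of a threshold tree: the root has region
`ℝ^d`, and a node labelled `(i, θ)` splits its region `B` into
`B ∩ {x | x i ≤ θ}` (left child) and `B ∩ {x | θ < x i}` (right child). -/
def leaves {d : ℕ} : ThresholdTree d → List (Set (Fin d → ℝ))
  | leaf => [Set.univ]
  | node i θ l r =>
      (l.leaves.map fun B => B ∩ {x | x i ≤ θ}) ++
      (r.leaves.map fun B => B ∩ {x | θ < x i})

/-- A threshold tree separates a finite set `𝒰` of centers if every leaf region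
contains exactly one point of `𝒰`. -/
def Separates {d : ℕ} (T : ThresholdTree d) (𝒰 : Finset (Fin d → ℝ)) : Prop :=
  ∀ B ∈ T.leaves, ∃! u, u ∈ 𝒰 ∧ u ∈ B

end ThresholdTree

/-- The `k`-medians cost of an assignment `π` on the data set `𝒳`. -/
noncomputable def cost1 {d : ℕ} (𝒳 : Finset (Fin d → ℝ))
    (π : (Fin d → ℝ) → (Fin d → ℝ)) : ℝ :=
  ∑ x ∈ 𝒳, ∑ i, |x i - π x i|

/-- The `m`-th harmonic number. -/
noncomputable def harm (m : ℕ) : ℝ := ∑ j ∈ Finset.range m, 1 / ((j : ℝ) + 1)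

/-!
Every grid cut `(i, θ)` gets a positive weight such that the total weight of the cuts separating a
data point `x` from a center `u` is `‖x - u‖₁`. Starting from all centers, choose separating cuts at
random in proportion to their weights; `x` keeps the centers on its side until a single one
survives. The expected cost of the survivor, as a function of the current set of centers, is an
average over the next cut, for all `x` simultaneously because the same cuts are available to each.
Hence some cut does not increase the expected total cost, and a tree is chosen greedily.

It remains to bound the expected distance from `x` to its survivor by `1 + H_{k-1}` times its
distance to a reference center `p`. Let `b` be the weights of the cuts separating `x` from `p` and
`a` the weights of the others, so that `∑ b = ‖x - p‖₁`. The `b`-part of any distance is at most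
`‖x - p‖₁`. If no `b`-cut ever occurs, then `p` survives, and its `a`-part is `0`. So only the
survivors after a first `b`-cut `c` contribute, whose set of centers is then contained in `R \ S c`
for the initial set `R` and the set `S c` of centers removed by `c`. This bounds the expected
`a`-part by `∑ b c * J (R \ S c)`, where `J` is the integral of the mean `a`-part of the survivor
along the process of `a`-cuts, stopped by `b`-cuts. Finally `J Q ≤ H_{#Q}` by comparison with an
exponential race: if `y u` is the `a`-part of the distance to `u`, `E` the mean `a`-part of the
survivor, and `X u` are independent standard exponential variables, then
`δ t = t * E + J - 𝔼 max_{u ∈ Q} (t * y u + X u)` is bounded above and satisfies `μ * δ ≤ δ'` with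
the total rate `μ` of the process. So `δ ≤ 0`, and at `t = 0` the expected maximum is `H_{#Q}`.
-/

open Finset
open Real (exp exp_pos exp_le_one_iff tendsto_exp_atBot)

open scoped BigOperators

/-! ### Exponential races -/

section Race

variable {α : Type*}

lemma sum_one_sub_mul_prod_erase_le [DecidableEq α] {Q T : Finset α} (hT : T ⊆ Q) {a : α → ℝ}
    (h0 : ∀ u ∈ Q, 0 ≤ a u) (h1 : ∀ u ∈ Q, a u ≤ 1) :
    ∑ u ∈ T, (1 - a u) * ∏ v ∈ Q.erase u, a v ≤ ∏ u ∈ Q \ T, a u - ∏ u ∈ Q, a u := by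
  induction T using Finset.induction_on with
  | empty => simp
  | insert v T hv ih =>
    obtain ⟨hvQ, hTQ⟩ := insert_subset_iff.1 hT
    have hsplit : a v * ∏ u ∈ Q \ insert v T, a u = ∏ u ∈ Q \ T, a u := by
      rw [show Q \ insert v T = (Q \ T).erase v by grind,
        mul_prod_erase _ _ (mem_sdiff.2 ⟨hvQ, hv⟩)]
    have hmono : ∏ u ∈ Q.erase v, a u ≤ ∏ u ∈ Q \ insert v T, a u :=
      prod_le_prod_of_subset_of_le_one (by grind) (by grind) (by grind)
    rw [sum_insert hv]
    linarith [ih hTQ, mul_le_mul_of_nonneg_left hmono (sub_nonneg.2 (h1 v hvQ))]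

/-- `raceExcess Q b` is the expectation of `max_{u ∈ Q} (log (b u) + E u)⁺` for independent standard
exponential variables `E u`. The integral of the tail `1 - ∏ (1 - b u * exp (-s))` over `s ≥ 0` is
written in the variable `x = exp (-s)`. -/
noncomputable def raceExcess (Q : Finset α) (b : α → ℝ) : ℝ :=
  ∫ x in (0 : ℝ)..1, (1 - ∏ u ∈ Q, (1 - b u * x)) / x

/-- `raceLead Q b u` is the probability that `u` realises the maximum in `raceExcess Q b` and that
this maximum is positive. It is the derivative of `raceExcess Q b` with respect to `log (b u)`. -/
noncomputable def raceLead [DecidableEq α] (Q : Finset α) (b : α → ℝ) (u : α) : ℝ :=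
  ∫ x in (0 : ℝ)..1, b u * ∏ v ∈ Q.erase u, (1 - b v * x)

lemma intervalIntegrable_raceExcess (Q : Finset α) (b : α → ℝ) :
    IntervalIntegrable (fun x ↦ (1 - ∏ u ∈ Q, (1 - b u * x)) / x) MeasureTheory.volume 0 1 := by
  set P : ℝ → ℝ := fun x ↦ ∏ u ∈ Q, (1 - b u * x)
  have hP : Differentiable ℝ P := by fun_prop
  have hslope : Continuous (dslope P 0) := continuousOn_univ.1 <|
    (continuousOn_dslope Filter.univ_mem).2 ⟨hP.continuous.continuousOn, hP 0⟩
  refine (hslope.neg.intervalIntegrable 0 1).congr fun x hx ↦ ?_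
  have hx0 : x ≠ 0 := (Set.uIoc_of_le (zero_le_one' ℝ) ▸ hx).1.ne'
  simp [dslope_of_ne _ hx0, slope_def_field, P, ← neg_div]

lemma sum_mul_raceLead [DecidableEq α] (A Q : Finset α) (b m : α → ℝ) :
    ∑ u ∈ A, m u * raceLead Q b u =
      ∫ x in (0 : ℝ)..1, ∑ u ∈ A, m u * (b u * ∏ v ∈ Q.erase u, (1 - b v * x)) := by
  rw [intervalIntegral.integral_finsetSum fun u _ ↦ Continuous.intervalIntegrable (by fun_prop) _ _]
  simp only [raceLead, intervalIntegral.integral_const_mul]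

lemma hasDerivAt_prod_one_sub [DecidableEq α] (Q : Finset α) {f : α → ℝ → ℝ} {f' : α → ℝ} {x : ℝ}
    (hf : ∀ u ∈ Q, HasDerivAt (f u) (f' u) x) :
    HasDerivAt (fun y ↦ 1 - ∏ u ∈ Q, (1 - f u y))
      (∑ u ∈ Q, f' u * ∏ v ∈ Q.erase u, (1 - f v x)) x := by
  refine ((HasDerivAt.fun_finsetProd fun u hu ↦ (hf u hu).const_sub 1).const_sub 1).congr_deriv ?_
  rw [← sum_neg_distrib]
  exact sum_congr rfl fun u _ ↦ by rw [smul_eq_mul]; ring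

lemma sum_raceLead [DecidableEq α] (Q : Finset α) (b : α → ℝ) :
    ∑ u ∈ Q, raceLead Q b u = 1 - ∏ u ∈ Q, (1 - b u) := by
  have hderiv (x : ℝ) : HasDerivAt (fun y ↦ 1 - ∏ u ∈ Q, (1 - b u * y))
      (∑ u ∈ Q, 1 * (b u * ∏ v ∈ Q.erase u, (1 - b v * x))) x := by
    simpa using hasDerivAt_prod_one_sub Q fun u _ ↦ (hasDerivAt_id x).const_mul (b u)
  have hftc := intervalIntegral.integral_eq_sub_of_hasDerivAt (fun x _ ↦ hderiv x)
    (Continuous.intervalIntegrable (by fun_prop) 0 1)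
  rw [← sum_mul_raceLead Q Q b fun _ ↦ 1] at hftc
  simpa using hftc

lemma raceExcess_nonneg {Q : Finset α} {b : α → ℝ} (h0 : ∀ u ∈ Q, 0 ≤ b u)
    (h1 : ∀ u ∈ Q, b u ≤ 1) : 0 ≤ raceExcess Q b :=
  intervalIntegral.integral_nonneg zero_le_one fun _ hx ↦ div_nonneg
    (sub_nonneg.2 <| prod_le_one
      (fun u hu ↦ sub_nonneg.2 <| mul_le_one₀ (h1 u hu) hx.1 hx.2)
      (fun u hu ↦ sub_le_self _ <| mul_nonneg (h0 u hu) hx.1)) hx.1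

lemma raceExcess_one (Q : Finset α) : raceExcess Q (fun _ ↦ 1) = harm #Q := by
  have hgeom : raceExcess Q (fun _ ↦ 1) =
      ∫ x in (0 : ℝ)..1, ∑ j ∈ range #Q, (1 - x) ^ j := by
    refine intervalIntegral.integral_congr_ae (.of_forall fun x hx ↦ ?_)
    have hx0 : x ≠ 0 := (Set.uIoc_of_le (zero_le_one' ℝ) ▸ hx).1.ne'
    have := mul_neg_geom_sum (1 - x) #Q
    rw [sub_sub_cancel] at this
    simp [← this, mul_div_cancel_left₀ _ hx0]
  have hpow (j : ℕ) : ∫ x in (0 : ℝ)..1, (1 - x) ^ j = 1 / ((j : ℝ) + 1) := by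
    simp [intervalIntegral.integral_comp_sub_left (fun x : ℝ ↦ x ^ j) 1, integral_pow]
  rw [hgeom, intervalIntegral.integral_finsetSum fun j _ ↦
    Continuous.intervalIntegrable (by fun_prop) _ _]
  simp only [hpow, harm]

lemma sum_raceLead_le_sub [DecidableEq α] {Q T : Finset α} (hT : T ⊆ Q) {b : α → ℝ}
    (h0 : ∀ u ∈ Q, 0 ≤ b u) (h1 : ∀ u ∈ Q, b u ≤ 1) :
    ∑ u ∈ T, raceLead Q b u ≤ raceExcess Q b - raceExcess (Q \ T) b := by
  have hint := (intervalIntegrable_raceExcess Q b).sub (intervalIntegrable_raceExcess (Q \ T) b)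
  have hsum := sum_mul_raceLead T Q b fun _ ↦ 1
  simp only [one_mul] at hsum
  rw [hsum, raceExcess, raceExcess, ← intervalIntegral.integral_sub
    (intervalIntegrable_raceExcess _ _) (intervalIntegrable_raceExcess _ _)]
  refine intervalIntegral.integral_mono_on_of_le_Ioo zero_le_one
    (Continuous.intervalIntegrable (by fun_prop) _ _) hint fun x hx ↦ ?_
  have hle := sum_one_sub_mul_prod_erase_le hT (a := fun u ↦ 1 - b u * x)
    (fun u hu ↦ sub_nonneg.2 <| mul_le_one₀ (h1 u hu) hx.1.le hx.2.le)
    (fun u hu ↦ sub_le_self _ <| mul_nonneg (h0 u hu) hx.1.le)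
  rw [← sub_div, le_div_iff₀ hx.1, sum_mul]
  convert! hle using 1
  · exact sum_congr rfl fun u _ ↦ by ring
  · ring

lemma hasDerivAt_raceExcess_exp [DecidableEq α] (Q : Finset α) (ℓ m : α → ℝ) (t : ℝ) :
    HasDerivAt (fun s ↦ raceExcess Q fun u ↦ exp (ℓ u + m u * s))
      (∑ u ∈ Q, m u * raceLead Q (fun u ↦ exp (ℓ u + m u * t)) u) t := by
  set b : ℝ → α → ℝ := fun s u ↦ exp (ℓ u + m u * s)
  set F' : ℝ → ℝ → ℝ := fun s x ↦ ∑ u ∈ Q, m u * (b s u * ∏ v ∈ Q.erase u, (1 - b s v * x))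
  have hcont : Continuous fun q : ℝ × ℝ ↦ F' q.1 q.2 := by fun_prop
  obtain ⟨C, hC⟩ := ((isCompact_closedBall t 1).prod
    (isCompact_Icc (a := (0 : ℝ)) (b := 1))).exists_bound_of_continuousOn hcont.continuousOn
  have hderiv (x : ℝ) (hx : x ≠ 0) (s : ℝ) :
      HasDerivAt (fun s ↦ (1 - ∏ u ∈ Q, (1 - b s u * x)) / x) (F' s x) s := by
    have hb (u : α) : HasDerivAt (fun s ↦ b s u * x) (m u * b s u * x) s :=
      ((((hasDerivAt_id s).const_mul (m u)).const_add (ℓ u)).exp.mul_const x).congr_deriv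
        (by simp only [b, id]; ring)
    refine ((hasDerivAt_prod_one_sub Q fun u _ ↦ hb u).div_const x).congr_deriv ?_
    rw [sum_div]
    exact sum_congr rfl fun u _ ↦ by field_simp
  rw [sum_mul_raceLead]
  refine (intervalIntegral.hasDerivAt_integral_of_dominated_loc_of_deriv_le (F' := F')
    (bound := fun _ ↦ C) (Metric.ball_mem_nhds t zero_lt_one)
    (.of_forall fun s ↦ (intervalIntegrable_raceExcess _ _).aestronglyMeasurable_restrict_uIoc)
    (intervalIntegrable_raceExcess _ _)
    (Continuous.aestronglyMeasurable (by fun_prop)) ?_ intervalIntegrable_const ?_).2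
  · refine .of_forall fun x hx s hs ↦ ?_
    rw [Set.uIoc_of_le zero_le_one] at hx
    exact hC (s, x) ⟨Metric.ball_subset_closedBall hs, hx.1.le, hx.2⟩
  · refine .of_forall fun x hx s _ ↦ hderiv x ?_ s
    rw [Set.uIoc_of_le zero_le_one] at hx
    exact hx.1.ne'

/-- `raceMax Q ℓ Λ` is the expectation of `max (Λ, max_{u ∈ Q} (ℓ u + E u))` for independent
standard exponential variables `E u`, provided that `ℓ ≤ Λ` on `Q`. -/
noncomputable def raceMax (Q : Finset α) (ℓ : α → ℝ) (Λ : ℝ) : ℝ :=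
  Λ + raceExcess Q fun u ↦ exp (ℓ u - Λ)

lemma exp_sub_le_one_of_forall_le {Q : Finset α} {ℓ : α → ℝ} {Λ : ℝ} (h : ∀ u ∈ Q, ℓ u ≤ Λ) :
    ∀ u ∈ Q, exp (ℓ u - Λ) ≤ 1 :=
  fun u hu ↦ exp_le_one_iff.2 (sub_nonpos.2 (h u hu))

lemma raceMax_empty (ℓ : α → ℝ) (Λ : ℝ) : raceMax ∅ ℓ Λ = Λ := by
  simp [raceMax, raceExcess]

lemma raceMax_zero (Q : Finset α) : raceMax Q 0 0 = harm #Q := by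
  simp [raceMax, raceExcess_one]

lemma le_raceMax {Q : Finset α} {ℓ : α → ℝ} {Λ : ℝ} (h : ∀ u ∈ Q, ℓ u ≤ Λ) : Λ ≤ raceMax Q ℓ Λ :=
  le_add_of_nonneg_right <|
    raceExcess_nonneg (fun _ _ ↦ (exp_pos _).le) (exp_sub_le_one_of_forall_le h)

lemma sum_raceLead_le_raceMax_sub [DecidableEq α] {Q T : Finset α} (hT : T ⊆ Q) {ℓ : α → ℝ} {Λ : ℝ}
    (h : ∀ u ∈ Q, ℓ u ≤ Λ) :
    ∑ u ∈ T, raceLead Q (fun u ↦ exp (ℓ u - Λ)) u ≤ raceMax Q ℓ Λ - raceMax (Q \ T) ℓ Λ := by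
  rw [raceMax, raceMax, add_sub_add_left_eq_sub]
  exact sum_raceLead_le_sub hT (fun _ _ ↦ (exp_pos _).le) (exp_sub_le_one_of_forall_le h)

lemma monotoneOn_raceMax (Q : Finset α) (ℓ : α → ℝ) {Λ₀ : ℝ} (h : ∀ u ∈ Q, ℓ u ≤ Λ₀) :
    MonotoneOn (raceMax Q ℓ) (Set.Ici Λ₀) := by
  classical
  have hderiv (Λ : ℝ) : HasDerivAt (raceMax Q ℓ) (∏ u ∈ Q, (1 - exp (ℓ u - Λ))) Λ := by
    have hexcess := hasDerivAt_raceExcess_exp Q ℓ (fun _ ↦ -1) Λ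
    simp only [neg_one_mul, ← sub_eq_add_neg, sum_neg_distrib, sum_raceLead] at hexcess
    exact ((hasDerivAt_id Λ).add hexcess).congr_deriv (by ring)
  refine monotoneOn_of_deriv_nonneg (convex_Ici _)
    (fun Λ _ ↦ (hderiv Λ).continuousAt.continuousWithinAt)
    (fun Λ _ ↦ (hderiv Λ).differentiableAt.differentiableWithinAt) fun Λ hΛ ↦ ?_
  rw [(hderiv Λ).deriv]
  exact prod_nonneg fun u hu ↦ sub_nonneg.2 <|
    exp_sub_le_one_of_forall_le (fun u hu ↦ (h u hu).trans (interior_subset hΛ)) u hu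

lemma hasDerivAt_raceMax_mul [DecidableEq α] {Q : Finset α} {y : α → ℝ} {u₀ : α} (hu₀ : u₀ ∈ Q)
    (t : ℝ) :
    HasDerivAt (fun s ↦ raceMax Q (fun u ↦ s * y u) (s * y u₀))
      (∑ u ∈ Q, y u * raceLead Q (fun u ↦ exp (t * y u - t * y u₀)) u) t := by
  have hexcess := hasDerivAt_raceExcess_exp Q 0 (fun u ↦ y u - y u₀) t
  have harg (s : ℝ) (u : α) : (0 : α → ℝ) u + (y u - y u₀) * s = s * y u - s * y u₀ := by
    simp only [Pi.zero_apply]; ring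
  simp only [harg] at hexcess
  -- The front runner `u₀` starts at the level, so somebody leads almost surely.
  have hlead : ∑ u ∈ Q, raceLead Q (fun u ↦ exp (t * y u - t * y u₀)) u = 1 := by
    rw [sum_raceLead, prod_eq_zero hu₀ (by simp), sub_zero]
  refine (((hasDerivAt_id t).mul_const (y u₀)).add hexcess).congr_deriv ?_
  simp only [sub_mul, sum_sub_distrib, ← mul_sum, hlead]
  ring

lemma nonpos_of_mul_le_deriv {δ δ' : ℝ → ℝ} {μ K : ℝ} (hμ : 0 < μ)
    (hδ : ∀ t, 0 ≤ t → HasDerivAt δ (δ' t) t) (hgrowth : ∀ t, 0 ≤ t → μ * δ t ≤ δ' t)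
    (hbdd : ∀ t, 0 ≤ t → δ t ≤ K) {t : ℝ} (ht : 0 ≤ t) : δ t ≤ 0 := by
  have hderiv (s : ℝ) (hs : 0 ≤ s) : HasDerivAt (fun s ↦ exp (-μ * s) * δ s)
      (exp (-μ * s) * (δ' s - μ * δ s)) s :=
    (((hasDerivAt_id s).const_mul (-μ)).exp.mul (hδ s hs)).congr_deriv
      (by simp only [id]; ring)
  have hmono : MonotoneOn (fun s ↦ exp (-μ * s) * δ s) (Set.Ici 0) := by
    refine monotoneOn_of_deriv_nonneg (convex_Ici _)
      (fun s hs ↦ (hderiv s hs).continuousAt.continuousWithinAt)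
      (fun s hs ↦ (hderiv s (interior_subset hs)).differentiableAt.differentiableWithinAt)
      fun s hs ↦ ?_
    rw [(hderiv s (interior_subset hs)).deriv]
    exact mul_nonneg (exp_pos _).le (sub_nonneg.2 (hgrowth s (interior_subset hs)))
  have hlim : Filter.Tendsto (fun s ↦ exp (-μ * s) * K) .atTop (nhds 0) := by
    simpa using (tendsto_exp_atBot.comp
      (Filter.tendsto_id.const_mul_atTop_of_neg (neg_neg_of_pos hμ))).mul_const K
  have hle : exp (-μ * t) * δ t ≤ 0 := by
    refine ge_of_tendsto hlim ?_
    filter_upwards [Filter.eventually_ge_atTop t] with s hs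
    have hs0 := ht.trans hs
    exact (hmono ht hs0 hs).trans (mul_le_mul_of_nonneg_left (hbdd s hs0) (exp_pos _).le)
  exact nonpos_of_mul_nonpos_right hle (exp_pos _)

end Race

/-! ### The random cut process -/

section CutProcess

variable {α ι : Type*} [DecidableEq α] [Fintype ι]

/-- The cuts `c` that remove some element of `R`, where a cut `c` acts by `R ↦ R \ S c`. -/
def hitting (S : ι → Finset α) (R : Finset α) : Finset ι := {c | R \ S c ⊂ R}

/-- The cuts that leave some element of `R` alive. -/
def sparing (S : ι → Finset α) (R : Finset α) : Finset ι := {c | (R \ S c).Nonempty}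

/-- The cuts that remove some, but not all, elements of `R`. -/
def splitting (S : ι → Finset α) (R : Finset α) : Finset ι :=
  {c ∈ sparing S R | R \ S c ⊂ R}

/-- The total rate at which an element `u` is removed when each cut `c` occurs at rate `w c`. -/
def cutDist (w : ι → ℝ) (S : ι → Finset α) (u : α) : ℝ := ∑ c with u ∈ S c, w c

/-- The expectation of `f` at the element of `R` that survives when the cuts of `splitting`, chosen
with probability proportional to `w`, are applied to `R` as long as there are any. If several
elements survive because no remaining cut has positive weight, `f` is averaged over them. -/
noncomputable def survivorMean (w : ι → ℝ) (S : ι → Finset α) (f : α → ℝ) (R : Finset α) : ℝ :=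
  if ∑ c ∈ splitting S R, w c = 0 then 𝔼 u ∈ R, f u
  else (∑ c : splitting S R, w c * survivorMean w S f (R \ S c)) / ∑ c ∈ splitting S R, w c
termination_by #R
decreasing_by exact card_lt_card (mem_filter.1 c.2).2

/-- The amount by which the cut `c` lowers `survivorMean w S f R`, where a cut that removes all of
`R` is considered to have no effect. -/
noncomputable def survivorDrop (w : ι → ℝ) (S : ι → Finset α) (f : α → ℝ) (R : Finset α) (c : ι) :
    ℝ :=
  if (R \ S c).Nonempty then survivorMean w S f R - survivorMean w S f (R \ S c) else 0

/-- The expected integral `∫ survivorMean (a + b) S (cutDist a S) (Q τ) dτ` along the process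
`τ ↦ Q τ` that starts at `Q` and applies the cut `c` at rate `a c`, stopped at the rate `b c` at
which a cut `c` that spares the current set occurs. -/
noncomputable def integratedMean (a b : ι → ℝ) (S : ι → Finset α) (Q : Finset α) : ℝ :=
  (survivorMean (a + b) S (cutDist a S) Q +
    ∑ c : hitting S Q, a c * integratedMean a b S (Q \ S c)) /
      (∑ c ∈ hitting S Q, a c + ∑ c ∈ sparing S Q, b c)
termination_by #Q
decreasing_by exact card_lt_card (mem_filter.1 c.2).2

variable {w a b : ι → ℝ} {S : ι → Finset α}

lemma mem_hitting {R : Finset α} {c : ι} : c ∈ hitting S R ↔ R \ S c ⊂ R := by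
  simp [hitting]

lemma mem_sparing {R : Finset α} {c : ι} : c ∈ sparing S R ↔ (R \ S c).Nonempty := by
  simp [sparing]

lemma mem_splitting {R : Finset α} {c : ι} :
    c ∈ splitting S R ↔ (R \ S c).Nonempty ∧ R \ S c ⊂ R := by
  simp [splitting, mem_sparing]

lemma sdiff_eq_self_of_notMem_hitting {R : Finset α} {c : ι} (hc : c ∉ hitting S R) :
    R \ S c = R :=
  sdiff_subset.eq_of_not_ssubset (mem_hitting.not.1 hc)

lemma mem_hitting_of_mem {R : Finset α} {c : ι} {u : α} (hu : u ∈ R) (hc : u ∈ S c) :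
    c ∈ hitting S R :=
  mem_hitting.2 <| sdiff_subset.ssubset_of_not_subset fun h ↦ (mem_sdiff.1 (h hu)).2 hc

lemma sum_hitting_mul_sub_sdiff (w : ι → ℝ) (S : ι → Finset α) (F : Finset α → ℝ)
    (R : Finset α) :
    ∑ c ∈ hitting S R, w c * (F R - F (R \ S c)) = ∑ c, w c * (F R - F (R \ S c)) :=
  sum_subset (subset_univ _) fun c _ hc ↦ by
    rw [sdiff_eq_self_of_notMem_hitting hc, sub_self, mul_zero]

lemma cutDist_nonneg (hw : 0 ≤ w) (u : α) : 0 ≤ cutDist w S u :=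
  sum_nonneg fun c _ ↦ hw c

lemma cutDist_add (u : α) : cutDist (a + b) S u = cutDist a S u + cutDist b S u :=
  sum_add_distrib

lemma cutDist_le_sum_hitting (hw : 0 ≤ w) {R : Finset α} {u : α} (hu : u ∈ R) :
    cutDist w S u ≤ ∑ c ∈ hitting S R, w c :=
  sum_le_sum_of_subset_of_nonneg
    (fun _ hc ↦ mem_hitting_of_mem hu (mem_filter.1 hc).2) fun c _ _ ↦ hw c

lemma sum_cutDist_mul (w : ι → ℝ) (S : ι → Finset α) (R : Finset α) (g : α → ℝ) :
    ∑ u ∈ R, cutDist w S u * g u = ∑ c ∈ hitting S R, w c * ∑ u ∈ R ∩ S c, g u := by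
  simp only [cutDist, sum_mul, mul_sum]
  refine sum_comm' fun u c ↦ ?_
  simp only [mem_filter_univ, mem_inter]
  exact ⟨fun h ↦ ⟨h, mem_hitting_of_mem h.1 h.2⟩, fun h ↦ h.1⟩

/-! ### The mean of the survivor -/

lemma survivorMean_of_sum_eq_zero {R : Finset α} (h : ∑ c ∈ splitting S R, w c = 0) (f : α → ℝ) :
    survivorMean w S f R = 𝔼 u ∈ R, f u := by
  rw [survivorMean, if_pos h]

lemma sum_splitting_mul_survivorMean {R : Finset α} (h : ∑ c ∈ splitting S R, w c ≠ 0)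
    (f : α → ℝ) :
    (∑ c ∈ splitting S R, w c) * survivorMean w S f R =
      ∑ c ∈ splitting S R, w c * survivorMean w S f (R \ S c) := by
  rw [survivorMean, if_neg h, mul_div_cancel₀ _ h,
    sum_coe_sort (splitting S R) fun c ↦ w c * survivorMean w S f (R \ S c)]

lemma survivorMean_of_card_le_one {R : Finset α} (hR : #R ≤ 1) (f : α → ℝ) :
    survivorMean w S f R = 𝔼 u ∈ R, f u := by
  have hempty : splitting S R = ∅ := eq_empty_of_forall_notMem fun c hc ↦ by
    obtain ⟨hne, hss⟩ := mem_splitting.1 hc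
    have := card_lt_card hss
    have := hne.card_pos
    lia
  exact survivorMean_of_sum_eq_zero (by rw [hempty, sum_empty]) f

lemma survivorMean_empty (f : α → ℝ) : survivorMean w S f ∅ = 0 := by
  rw [survivorMean_of_card_le_one (by simp), expect_empty]

lemma survivorMean_singleton (f : α → ℝ) (u : α) : survivorMean w S f {u} = f u := by
  rw [survivorMean_of_card_le_one (by simp), expect_singleton]

lemma survivorDrop_of_nonempty {R : Finset α} {c : ι} (h : (R \ S c).Nonempty) (f : α → ℝ) :
    survivorDrop w S f R c = survivorMean w S f R - survivorMean w S f (R \ S c) :=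
  if_pos h

lemma survivorDrop_of_notMem_sparing {R : Finset α} {c : ι} (h : c ∉ sparing S R) (f : α → ℝ) :
    survivorDrop w S f R c = 0 :=
  if_neg (mem_sparing.not.1 h)

lemma survivorDrop_of_notMem_hitting {R : Finset α} {c : ι} (h : c ∉ hitting S R) (f : α → ℝ) :
    survivorDrop w S f R c = 0 := by
  rw [survivorDrop, sdiff_eq_self_of_notMem_hitting h, sub_self, ite_self]

lemma sum_mul_survivorDrop (hw : 0 ≤ w) (f : α → ℝ) (R : Finset α) :
    ∑ c, w c * survivorDrop w S f R c = 0 := by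
  have hsplit : ∑ c, w c * survivorDrop w S f R c =
      ∑ c ∈ splitting S R, w c * (survivorMean w S f R - survivorMean w S f (R \ S c)) := by
    simp only [splitting, sparing, filter_filter, sum_filter]
    refine sum_congr rfl fun c _ ↦ ?_
    by_cases hne : (R \ S c).Nonempty <;> by_cases hss : R \ S c ⊂ R
    · rw [survivorDrop_of_nonempty hne, if_pos ⟨hne, hss⟩]
    · rw [survivorDrop_of_notMem_hitting (mem_hitting.not.2 hss), if_neg (hss ·.2), mul_zero]
    all_goals
      rw [survivorDrop_of_notMem_sparing (mem_sparing.not.2 hne), if_neg (hne ·.1), mul_zero]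
  rw [hsplit]
  by_cases h : ∑ c ∈ splitting S R, w c = 0
  · refine sum_eq_zero fun c hc ↦ ?_
    rw [(sum_eq_zero_iff_of_nonneg fun c _ ↦ hw c).1 h c hc, zero_mul]
  · simp only [mul_sub, sum_sub_distrib, ← sum_mul]
    rw [sum_splitting_mul_survivorMean h, sub_self]

lemma survivorMean_le_add (hw : 0 ≤ w) {f g : α → ℝ} {K : ℝ} {R : Finset α} (hR : R.Nonempty)
    (hfg : ∀ u ∈ R, f u ≤ g u + K) : survivorMean w S f R ≤ survivorMean w S g R + K := by
  induction R using Finset.strongInduction with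
  | H R ih =>
    by_cases h : ∑ c ∈ splitting S R, w c = 0
    · rw [survivorMean_of_sum_eq_zero h, survivorMean_of_sum_eq_zero h, ← expect_const hR K,
        ← expect_add_distrib]
      exact expect_le_expect hfg
    · have hpos := (sum_nonneg fun c _ ↦ hw c).lt_of_ne' h
      refine le_of_mul_le_mul_left ?_ hpos
      rw [mul_add, sum_splitting_mul_survivorMean h, sum_splitting_mul_survivorMean h, sum_mul,
        ← sum_add_distrib]
      refine sum_le_sum fun c hc ↦ ?_
      obtain ⟨hne, hss⟩ := mem_splitting.1 hc
      rw [← mul_add]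
      exact mul_le_mul_of_nonneg_left
        (ih _ hss hne fun u hu ↦ hfg u (sdiff_subset hu)) (hw c)

lemma survivorMean_zero (R : Finset α) : survivorMean w S 0 R = 0 := by
  induction R using Finset.strongInduction with
  | H R ih =>
    by_cases h : ∑ c ∈ splitting S R, w c = 0
    · simp [survivorMean_of_sum_eq_zero h]
    · refine (mul_eq_zero.1 ?_).resolve_left h
      rw [sum_splitting_mul_survivorMean h]
      exact sum_eq_zero fun c hc ↦ by rw [ih _ (mem_splitting.1 hc).2, mul_zero]

lemma survivorMean_le (hw : 0 ≤ w) {f : α → ℝ} {K : ℝ} (hK : 0 ≤ K) {R : Finset α}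
    (hf : ∀ u ∈ R, f u ≤ K) : survivorMean w S f R ≤ K := by
  obtain rfl | hR := R.eq_empty_or_nonempty
  · rwa [survivorMean_empty]
  · simpa [survivorMean_zero] using
      survivorMean_le_add hw (g := 0) hR fun u hu ↦ by simpa using hf u hu

lemma survivorMean_nonneg (hw : 0 ≤ w) {f : α → ℝ} (hf : 0 ≤ f) (R : Finset α) :
    0 ≤ survivorMean w S f R := by
  obtain rfl | hR := R.eq_empty_or_nonempty
  · rw [survivorMean_empty]
  · simpa [survivorMean_zero] using
      survivorMean_le_add hw (f := 0) (K := 0) hR fun u _ ↦ by simpa using hf u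

/-! ### The integrated mean of the survivor -/

lemma integratedMean_eq_div (Q : Finset α) :
    integratedMean a b S Q = (survivorMean (a + b) S (cutDist a S) Q +
      ∑ c ∈ hitting S Q, a c * integratedMean a b S (Q \ S c)) /
        (∑ c ∈ hitting S Q, a c + ∑ c ∈ sparing S Q, b c) := by
  rw [integratedMean, sum_coe_sort (hitting S Q) fun c ↦ a c * integratedMean a b S (Q \ S c)]

lemma sum_hitting_eq_zero (ha : 0 ≤ a) (hb : 0 ≤ b) {Q : Finset α}
    (h : ∑ c ∈ hitting S Q, a c + ∑ c ∈ sparing S Q, b c = 0) : ∑ c ∈ hitting S Q, a c = 0 :=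
  ((add_eq_zero_iff_of_nonneg (sum_nonneg fun c _ ↦ ha c) (sum_nonneg fun c _ ↦ hb c)).1 h).1

lemma survivorMean_cutDist_eq_zero (ha : 0 ≤ a) (hb : 0 ≤ b) {Q : Finset α}
    (h : ∑ c ∈ hitting S Q, a c + ∑ c ∈ sparing S Q, b c = 0) :
    survivorMean (a + b) S (cutDist a S) Q = 0 :=
  le_antisymm
    (survivorMean_le (add_nonneg ha hb) le_rfl fun _ hu ↦
      (cutDist_le_sum_hitting ha hu).trans (sum_hitting_eq_zero ha hb h).le)
    (survivorMean_nonneg (add_nonneg ha hb) (cutDist_nonneg ha) Q)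

lemma integratedMean_nonneg (ha : 0 ≤ a) (hb : 0 ≤ b) (Q : Finset α) :
    0 ≤ integratedMean a b S Q := by
  induction Q using Finset.strongInduction with
  | H Q ih =>
    rw [integratedMean_eq_div]
    exact div_nonneg
      (add_nonneg (survivorMean_nonneg (add_nonneg ha hb) (cutDist_nonneg ha) Q)
        (sum_nonneg fun c hc ↦ mul_nonneg (ha c) (ih _ (mem_hitting.1 hc))))
      (add_nonneg (sum_nonneg fun c _ ↦ ha c) (sum_nonneg fun c _ ↦ hb c))

lemma integratedMean_eq_zero {Q : Finset α}
    (h : ∑ c ∈ hitting S Q, a c + ∑ c ∈ sparing S Q, b c = 0) : integratedMean a b S Q = 0 := by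
  rw [integratedMean_eq_div, h, div_zero]

lemma integratedMean_empty : integratedMean a b S ∅ = 0 := by
  rw [integratedMean_eq_div]
  simp [hitting, sparing]

lemma sum_hitting_mul_integratedMean_sub (ha : 0 ≤ a) (hb : 0 ≤ b) (Q : Finset α) :
    ∑ c ∈ hitting S Q, a c * (integratedMean a b S Q - integratedMean a b S (Q \ S c)) +
      (∑ c ∈ sparing S Q, b c) * integratedMean a b S Q =
        survivorMean (a + b) S (cutDist a S) Q := by
  simp only [mul_sub, sum_sub_distrib, ← sum_mul]
  by_cases h : ∑ c ∈ hitting S Q, a c + ∑ c ∈ sparing S Q, b c = 0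
  · have hzero := (sum_eq_zero_iff_of_nonneg fun c _ ↦ ha c).1 (sum_hitting_eq_zero ha hb h)
    have hsum : ∑ c ∈ hitting S Q, a c * integratedMean a b S (Q \ S c) = 0 :=
      sum_eq_zero fun c hc ↦ by rw [hzero c hc, zero_mul]
    rw [survivorMean_cutDist_eq_zero ha hb h, integratedMean_eq_zero h, hsum]
    ring
  · have hmul := mul_div_cancel₀ (survivorMean (a + b) S (cutDist a S) Q +
      ∑ c ∈ hitting S Q, a c * integratedMean a b S (Q \ S c)) h
    rw [← integratedMean_eq_div] at hmul
    linarith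

/-! ### Comparison with the race -/

/-- The defect in the comparison of `survivorMean` and `integratedMean` with the race in which `u`
starts at `t * cutDist a S u` and the level is `t * Y`. -/
noncomputable def raceDefect (a b : ι → ℝ) (S : ι → Finset α) (Y t : ℝ) (Q : Finset α) : ℝ :=
  t * survivorMean (a + b) S (cutDist a S) Q + integratedMean a b S Q -
    raceMax Q (fun u ↦ t * cutDist a S u) (t * Y)

lemma mul_survivorMean_le (ha : 0 ≤ a) (hb : 0 ≤ b) {Q : Finset α} {Y t : ℝ} (hY0 : 0 ≤ Y)
    (hY : ∀ u ∈ Q, cutDist a S u ≤ Y) (ht : 0 ≤ t) :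
    t * survivorMean (a + b) S (cutDist a S) Q ≤ t * Y :=
  mul_le_mul_of_nonneg_left (survivorMean_le (add_nonneg ha hb) hY0 hY) ht

lemma mul_le_raceMax {Q : Finset α} {Y t : ℝ} (hY : ∀ u ∈ Q, cutDist a S u ≤ Y) (ht : 0 ≤ t) :
    t * Y ≤ raceMax Q (fun u ↦ t * cutDist a S u) (t * Y) :=
  le_raceMax fun u hu ↦ mul_le_mul_of_nonneg_left (hY u hu) ht

lemma raceDefect_le_integratedMean (ha : 0 ≤ a) (hb : 0 ≤ b) {Q : Finset α} {Y t : ℝ}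
    (hY0 : 0 ≤ Y) (hY : ∀ u ∈ Q, cutDist a S u ≤ Y) (ht : 0 ≤ t) :
    raceDefect a b S Y t Q ≤ integratedMean a b S Q := by
  have := mul_survivorMean_le ha hb hY0 hY ht
  have := mul_le_raceMax hY ht
  rw [raceDefect]
  linarith

lemma raceDefect_le_of_mem_sparing (ha : 0 ≤ a) (hb : 0 ≤ b) {Q : Finset α} {Y t : ℝ}
    (hY0 : 0 ≤ Y) (hY : ∀ u ∈ Q, cutDist a S u ≤ Y) (ht : 0 ≤ t) {c : ι} (hc : c ∈ sparing S Q) :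
    raceDefect a b S Y t Q ≤
      integratedMean a b S Q + t * survivorDrop (a + b) S (cutDist a S) Q c := by
  have := mul_survivorMean_le ha hb hY0 (fun u hu ↦ hY u (sdiff_subset (t := S c) hu)) ht
  have := mul_le_raceMax hY ht
  rw [raceDefect, survivorDrop_of_nonempty (mem_sparing.1 hc)]
  linarith

lemma raceDefect_le_of_sdiff (ha : 0 ≤ a) (hb : 0 ≤ b) {Q : Finset α} {Y t : ℝ}
    (hY0 : 0 ≤ Y) (hY : ∀ u ∈ Q, cutDist a S u ≤ Y) (ht : 0 ≤ t) {c : ι}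
    (hc : raceDefect a b S Y t (Q \ S c) ≤ 0) :
    raceDefect a b S Y t Q ≤
      integratedMean a b S Q - integratedMean a b S (Q \ S c) +
        t * survivorDrop (a + b) S (cutDist a S) Q c -
          ∑ u ∈ Q ∩ S c, raceLead Q (fun u ↦ exp (t * cutDist a S u - t * Y)) u := by
  have hlead := sum_raceLead_le_raceMax_sub (T := Q ∩ S c) inter_subset_left
    fun u hu ↦ mul_le_mul_of_nonneg_left (hY u hu) ht
  rw [sdiff_inter_self_left] at hlead
  rw [raceDefect] at hc ⊢
  by_cases hne : (Q \ S c).Nonempty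
  · rw [survivorDrop_of_nonempty hne]
    linarith
  · rw [survivorDrop_of_notMem_sparing (mem_sparing.not.2 hne)]
    rw [not_nonempty_iff_eq_empty.1 hne, raceMax_empty] at hlead
    rw [not_nonempty_iff_eq_empty.1 hne, integratedMean_empty]
    linarith [mul_survivorMean_le ha hb hY0 hY ht]

lemma rate_mul_raceDefect_le (ha : 0 ≤ a) (hb : 0 ≤ b) {Q : Finset α} {Y t : ℝ} (hY0 : 0 ≤ Y)
    (hY : ∀ u ∈ Q, cutDist a S u ≤ Y) (ht : 0 ≤ t)
    (hhit : ∀ c ∈ hitting S Q, raceDefect a b S Y t (Q \ S c) ≤ 0) :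
    (∑ c ∈ hitting S Q, a c + ∑ c ∈ sparing S Q, b c) * raceDefect a b S Y t Q ≤
      survivorMean (a + b) S (cutDist a S) Q - ∑ u ∈ Q, cutDist a S u *
        raceLead Q (fun u ↦ exp (t * cutDist a S u - t * Y)) u := by
  have hdrop : ∑ c ∈ hitting S Q, a c * survivorDrop (a + b) S (cutDist a S) Q c +
      ∑ c ∈ sparing S Q, b c * survivorDrop (a + b) S (cutDist a S) Q c = 0 := by
    rw [← sum_mul_survivorDrop (S := S) (add_nonneg ha hb) (cutDist a S) Q,
      sum_subset (subset_univ (hitting S Q)) fun c _ hc ↦ by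
        rw [survivorDrop_of_notMem_hitting hc, mul_zero],
      sum_subset (subset_univ (sparing S Q)) fun c _ hc ↦ by
        rw [survivorDrop_of_notMem_sparing hc, mul_zero], ← sum_add_distrib]
    simp only [Pi.add_apply, add_mul]
  rw [add_mul, sum_mul, sum_mul]
  refine (add_le_add
    (sum_le_sum fun c hc ↦ mul_le_mul_of_nonneg_left
      (raceDefect_le_of_sdiff ha hb hY0 hY ht (hhit c hc)) (ha c))
    (sum_le_sum fun c hc ↦ mul_le_mul_of_nonneg_left
      (raceDefect_le_of_mem_sparing ha hb hY0 hY ht hc) (hb c))).trans_eq ?_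
  rw [← sum_hitting_mul_integratedMean_sub ha hb, sum_cutDist_mul]
  have hdrop' := congrArg (t * ·) hdrop
  simp only [mul_add, mul_sub, sum_add_distrib, sum_sub_distrib, mul_sum, sum_mul,
    mul_left_comm t] at hdrop' ⊢
  linarith

lemma raceDefect_nonpos_of_isMax (ha : 0 ≤ a) (hb : 0 ≤ b) {Q : Finset α} {u₀ : α} (hu₀ : u₀ ∈ Q)
    (hmax : ∀ u ∈ Q, cutDist a S u ≤ cutDist a S u₀)
    (hhit : ∀ c ∈ hitting S Q, ∀ t, 0 ≤ t → raceDefect a b S (cutDist a S u₀) t (Q \ S c) ≤ 0)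
    {t : ℝ} (ht : 0 ≤ t) : raceDefect a b S (cutDist a S u₀) t Q ≤ 0 := by
  have hY0 : 0 ≤ cutDist a S u₀ := cutDist_nonneg ha u₀
  by_cases hμ : ∑ c ∈ hitting S Q, a c + ∑ c ∈ sparing S Q, b c = 0
  · simpa [integratedMean_eq_zero hμ] using raceDefect_le_integratedMean ha hb hY0 hmax ht
  · have hμpos := (add_nonneg (sum_nonneg fun c _ ↦ ha c) (sum_nonneg fun c _ ↦ hb c)).lt_of_ne' hμ
    refine nonpos_of_mul_le_deriv hμpos (fun s _ ↦ ?_)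
      (fun s hs ↦ rate_mul_raceDefect_le ha hb hY0 hmax hs fun c hc ↦ hhit c hc s hs)
      (fun s hs ↦ raceDefect_le_integratedMean ha hb hY0 hmax hs) ht
    exact ((((hasDerivAt_id s).mul_const _).add_const (integratedMean a b S Q)).sub
      (hasDerivAt_raceMax_mul (y := cutDist a S) hu₀ s)).congr_deriv (by rw [one_mul])

lemma raceDefect_nonpos (ha : 0 ≤ a) (hb : 0 ≤ b) {Q : Finset α} {Y t : ℝ} (hY0 : 0 ≤ Y)
    (hY : ∀ u ∈ Q, cutDist a S u ≤ Y) (ht : 0 ≤ t) : raceDefect a b S Y t Q ≤ 0 := by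
  induction Q using Finset.strongInduction generalizing Y t with
  | H Q ih =>
    obtain rfl | hQ := Q.eq_empty_or_nonempty
    · exact (raceDefect_le_integratedMean ha hb hY0 hY ht).trans_eq integratedMean_empty
    obtain ⟨u₀, hu₀, hmax⟩ := Q.exists_max_image (cutDist a S) hQ
    have hle : raceDefect a b S (cutDist a S u₀) t Q ≤ 0 :=
      raceDefect_nonpos_of_isMax ha hb hu₀ hmax (fun c hc s hs ↦
        ih _ (mem_hitting.1 hc) (cutDist_nonneg ha u₀) (fun u hu ↦ hmax u (sdiff_subset hu)) hs) ht
    have hmono := monotoneOn_raceMax Q (fun u ↦ t * cutDist a S u)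
      (fun u hu ↦ mul_le_mul_of_nonneg_left (hmax u hu) ht) Set.self_mem_Ici
      (mul_le_mul_of_nonneg_left (hY u₀ hu₀) ht) (mul_le_mul_of_nonneg_left (hY u₀ hu₀) ht)
    rw [raceDefect] at hle ⊢
    linarith

lemma integratedMean_le_harm (ha : 0 ≤ a) (hb : 0 ≤ b) (Q : Finset α) :
    integratedMean a b S Q ≤ harm #Q := by
  have h := raceDefect_nonpos (S := S) ha hb (sum_nonneg fun u (_ : u ∈ Q) ↦ cutDist_nonneg ha u)
    (fun u hu ↦ single_le_sum (fun u _ ↦ cutDist_nonneg ha u) hu) le_rfl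
  simp only [raceDefect, zero_mul, zero_add] at h
  exact (sub_nonpos.1 h).trans_eq (raceMax_zero Q)

/-! ### The cost of losing a reference element -/

lemma sum_hitting_mul_survivorMean_sub (ha : 0 ≤ a) (hb : 0 ≤ b) {p : α}
    (hap : ∀ c, p ∈ S c → a c = 0) {R : Finset α} (hp : p ∈ R) (f : α → ℝ) :
    ∑ c ∈ hitting S R, a c * (survivorMean (a + b) S f R - survivorMean (a + b) S f (R \ S c)) +
      (∑ c ∈ sparing S R, b c) * survivorMean (a + b) S f R =
        ∑ c, b c * survivorMean (a + b) S f (R \ S c) := by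
  have hdrop (c : ι) : (a + b) c * survivorDrop (a + b) S f R c =
      a c * (survivorMean (a + b) S f R - survivorMean (a + b) S f (R \ S c)) +
        (if (R \ S c).Nonempty then b c else 0) * survivorMean (a + b) S f R -
          b c * survivorMean (a + b) S f (R \ S c) := by
    by_cases hne : (R \ S c).Nonempty
    · rw [survivorDrop_of_nonempty hne, if_pos hne, Pi.add_apply]
      ring
    · have hempty := not_nonempty_iff_eq_empty.1 hne
      have hac : a c = 0 := hap c (sdiff_eq_empty_iff_subset.1 hempty hp)
      rw [survivorDrop_of_notMem_sparing (mem_sparing.not.2 hne), if_neg hne, hempty,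
        survivorMean_empty, hac]
      ring
  have hsum := sum_mul_survivorDrop (S := S) (add_nonneg ha hb) f R
  simp only [hdrop, sum_sub_distrib, sum_add_distrib, ← sum_mul] at hsum
  rw [sum_hitting_mul_sub_sdiff, sparing, sum_filter]
  exact sub_eq_zero.1 hsum

lemma sum_mul_survivorMean_sdiff_le (ha : 0 ≤ a) (hb : 0 ≤ b) (R : Finset α) :
    ∑ c, b c * survivorMean (a + b) S (cutDist a S) (R \ S c) ≤
      ∑ c' ∈ hitting S R, a c' * (∑ c, b c * integratedMean a b S (R \ S c) -
        ∑ c, b c * integratedMean a b S ((R \ S c') \ S c)) +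
      (∑ c ∈ sparing S R, b c) * ∑ c, b c * integratedMean a b S (R \ S c) := by
  have hsub (c : ι) : sparing S (R \ S c) ⊆ sparing S R := fun c' hc' ↦
    mem_sparing.2 ((mem_sparing.1 hc').mono (sdiff_subset_sdiff sdiff_subset subset_rfl))
  rw [sum_hitting_mul_sub_sdiff a S fun R ↦ ∑ c, b c * integratedMean a b S (R \ S c)]
  calc ∑ c, b c * survivorMean (a + b) S (cutDist a S) (R \ S c)
      ≤ ∑ c, b c * (∑ c', a c' *
          (integratedMean a b S (R \ S c) - integratedMean a b S ((R \ S c') \ S c)) +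
            (∑ c' ∈ sparing S R, b c') * integratedMean a b S (R \ S c)) := by
        refine sum_le_sum fun c _ ↦ mul_le_mul_of_nonneg_left ?_ (hb c)
        rw [← sum_hitting_mul_integratedMean_sub ha hb, sum_hitting_mul_sub_sdiff]
        simp only [sdiff_right_comm _ (S c)]
        gcongr
        · exact integratedMean_nonneg ha hb _
        · exact fun c' _ _ ↦ hb c'
        · exact hsub c
    _ = _ := by
        simp only [mul_add, sum_add_distrib, ← sum_sub_distrib, ← mul_sub, mul_sum]
        rw [sum_comm]
        simp only [mul_left_comm]

lemma survivorMean_le_sum_mul_integratedMean (ha : 0 ≤ a) (hb : 0 ≤ b) {p : α}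
    (hap : ∀ c, p ∈ S c → a c = 0) {R : Finset α} (hp : p ∈ R) :
    survivorMean (a + b) S (cutDist a S) R ≤ ∑ c, b c * integratedMean a b S (R \ S c) := by
  induction R using Finset.strongInduction with
  | H R ih =>
    have hE := sum_hitting_mul_survivorMean_sub ha hb hap hp (cutDist a S)
    have hB := sum_mul_survivorMean_sdiff_le (S := S) ha hb R
    set E := survivorMean (a + b) S (cutDist a S)
    set B : Finset α → ℝ := fun R ↦ ∑ c, b c * integratedMean a b S (R \ S c)
    have hih (c : ι) (hc : c ∈ hitting S R) : a c * E (R \ S c) ≤ a c * B (R \ S c) := by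
      by_cases hpc : p ∈ S c
      · simp [hap c hpc]
      · exact mul_le_mul_of_nonneg_left
          (ih _ (mem_hitting.1 hc) (mem_sdiff.2 ⟨hp, hpc⟩)) (ha c)
    by_cases hμ : ∑ c ∈ hitting S R, a c + ∑ c ∈ sparing S R, b c = 0
    · exact (survivorMean_cutDist_eq_zero ha hb hμ).trans_le <| sum_nonneg fun c _ ↦
        mul_nonneg (hb c) (integratedMean_nonneg ha hb _)
    · have hμpos := (add_nonneg (sum_nonneg fun c _ ↦ ha c)
        (sum_nonneg fun c _ ↦ hb c)).lt_of_ne' hμ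
      refine le_of_mul_le_mul_left ?_ hμpos
      simp only [mul_sub, sum_sub_distrib, ← sum_mul] at hE hB
      linarith [sum_le_sum hih]

lemma harm_mono : Monotone harm := fun m n h ↦
  sum_le_sum_of_subset_of_nonneg (range_subset_range.2 h) fun _ _ _ ↦ by positivity

lemma survivorMean_cutDist_le (hw : 0 ≤ w) {R : Finset α} {p : α} (hp : p ∈ R) :
    survivorMean w S (cutDist w S) R ≤ (1 + harm (#R - 1)) * cutDist w S p := by
  set a : ι → ℝ := fun c ↦ if p ∈ S c then 0 else w c
  set b : ι → ℝ := fun c ↦ if p ∈ S c then w c else 0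
  have ha : 0 ≤ a := fun c ↦ ite_nonneg le_rfl (hw c)
  have hb : 0 ≤ b := fun c ↦ ite_nonneg (hw c) le_rfl
  have hab : w = a + b := by ext c; by_cases h : p ∈ S c <;> simp [a, b, h]
  have hsum : ∑ c, b c = cutDist w S p := (sum_filter _ _).symm
  have hcut (u : α) (_ : u ∈ R) : cutDist w S u ≤ cutDist a S u + cutDist w S p := by
    nth_rw 1 [hab]
    rw [cutDist_add, ← hsum]
    exact add_le_add_right (sum_le_sum_of_subset_of_nonneg (subset_univ _) fun c _ _ ↦ hb c) _
  have hJ (c : ι) : b c * integratedMean a b S (R \ S c) ≤ b c * harm (#R - 1) := by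
    by_cases hc : p ∈ S c
    · refine mul_le_mul_of_nonneg_left ((integratedMean_le_harm ha hb _).trans
        (harm_mono ?_)) (hb c)
      exact Nat.le_sub_one_of_lt (card_lt_card (mem_hitting.1 (mem_hitting_of_mem hp hc)))
    · simp [b, hc]
  calc survivorMean w S (cutDist w S) R
      ≤ survivorMean w S (cutDist a S) R + cutDist w S p := survivorMean_le_add hw ⟨p, hp⟩ hcut
    _ ≤ ∑ c, b c * harm (#R - 1) + cutDist w S p := by
        rw [hab]
        gcongr
        exact (survivorMean_le_sum_mul_integratedMean ha hb (fun c hc ↦ if_pos hc) hp).trans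
          (sum_le_sum fun c _ ↦ hJ c)
    _ = (1 + harm (#R - 1)) * cutDist w S p := by rw [← sum_mul, hsum]; ring

end CutProcess

/-! ### Threshold cuts -/

lemma exists_pos_forall_sum_le_eq_sub {V : Finset ℝ} {C : ℝ} (hC : ∀ v ∈ V, v < C) :
    ∃ w : ℝ → ℝ, (∀ v ∈ V, 0 < w v) ∧ ∀ a ∈ V, ∑ v ∈ V with a ≤ v, w v = C - a := by
  induction V using Finset.induction_on_min with
  | empty => exact ⟨0, by simp⟩
  | insert m V hm ih =>
    obtain ⟨w, hpos, hw⟩ := ih fun v hv ↦ hC v (mem_insert_of_mem hv)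
    have hmV : m ∉ V := fun h ↦ (hm m h).false
    set w' := Function.update w m (C - m - ∑ v ∈ V, w v)
    have hw'm : w' m = C - m - ∑ v ∈ V, w v := Function.update_self ..
    have hw'V {v : ℝ} (hv : v ∈ V) : w' v = w v := Function.update_of_ne (hm v hv).ne' ..
    have hpos' : 0 < w' m := by
      rw [hw'm]
      obtain rfl | hV := V.eq_empty_or_nonempty
      · simpa using hC m (mem_insert_self m ∅)
      · have hmin := hw _ (V.min'_mem hV)
        rw [filter_true_of_mem fun v hv ↦ V.min'_le v hv] at hmin
        linarith [hm _ (V.min'_mem hV)]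
    refine ⟨w', forall_mem_insert .. |>.2 ⟨hpos', fun v hv ↦ hw'V hv ▸ hpos v hv⟩,
      forall_mem_insert .. |>.2 ⟨?_, fun a ha ↦ ?_⟩⟩
    · rw [filter_true_of_mem (by simpa using fun v hv ↦ (hm v hv).le), sum_insert hmV, hw'm,
        sum_congr rfl fun v hv ↦ hw'V hv]
      ring
    · rw [filter_insert, if_neg (hm a ha).not_ge, ← hw a ha]
      exact sum_congr rfl fun v hv ↦ hw'V (mem_of_mem_filter v hv)

lemma exists_pos_sum_separating_eq_abs_sub (V : Finset ℝ) :
    ∃ w : ℝ → ℝ, (∀ v ∈ V, 0 < w v) ∧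
      ∀ a ∈ V, ∀ b ∈ V, ∑ θ ∈ V with ¬(a ≤ θ ↔ b ≤ θ), w θ = |a - b| := by
  obtain ⟨M, hM⟩ := V.exists_le
  obtain ⟨w, hpos, hw⟩ := exists_pos_forall_sum_le_eq_sub (V := V) (C := M + 1) fun v hv ↦
    (hM v hv).trans_lt (lt_add_one M)
  refine ⟨w, hpos, fun a ha b hb ↦ ?_⟩
  wlog hab : a ≤ b generalizing a b
  · rw [abs_sub_comm, ← this b hb a ha (le_of_not_ge hab)]
    simp only [iff_comm]
  have hsep : {θ ∈ V | ¬(a ≤ θ ↔ b ≤ θ)} = {θ ∈ V | a ≤ θ} \ {θ ∈ V | b ≤ θ} := by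
    grind
  have hsub : {θ ∈ V | b ≤ θ} ⊆ {θ ∈ V | a ≤ θ} :=
    monotone_filter_right V fun θ _ h ↦ hab.trans h
  rw [hsep, sum_sdiff_eq_sub hsub, hw a ha, hw b hb, abs_of_nonpos (sub_nonpos.2 hab)]
  ring

section ThresholdCuts

variable {d : ℕ} {V : Finset ℝ} {𝒰 R : Finset (Fin d → ℝ)}

/-- The centers in `𝒰` separated from the data point `x` by the threshold cut `c`. -/
noncomputable def cutOff (𝒰 : Finset (Fin d → ℝ)) (x : Fin d → ℝ) (c : Fin d × V) :
    Finset (Fin d → ℝ) :=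
  {u ∈ 𝒰 | ¬(x c.1 ≤ (c.2 : ℝ) ↔ u c.1 ≤ (c.2 : ℝ))}

/-- The threshold cuts with points of `R` on both sides. -/
noncomputable def separating (V : Finset ℝ) (R : Finset (Fin d → ℝ)) : Finset (Fin d × V) :=
  {c | {u ∈ R | u c.1 ≤ (c.2 : ℝ)}.Nonempty ∧ {u ∈ R | ¬u c.1 ≤ (c.2 : ℝ)}.Nonempty}

lemma cutDist_cutOff {w : ℝ → ℝ}
    (hw : ∀ a ∈ V, ∀ b ∈ V, ∑ θ ∈ V with ¬(a ≤ θ ↔ b ≤ θ), w θ = |a - b|) {x u : Fin d → ℝ}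
    (hx : ∀ i, x i ∈ V) (hu : ∀ i, u i ∈ V) (hu𝒰 : u ∈ 𝒰) :
    cutDist (fun c : Fin d × V ↦ w c.2) (cutOff 𝒰 x) u = ∑ i, |x i - u i| := by
  simp only [cutDist, cutOff, mem_filter, hu𝒰, true_and, sum_filter, Fintype.sum_prod_type,
    ← hw _ (hx _) _ (hu _)]
  exact sum_congr rfl fun i _ ↦ sum_coe_sort V fun θ ↦ if ¬(x i ≤ θ ↔ u i ≤ θ) then w θ else 0

lemma sdiff_cutOff_of_le (hR : R ⊆ 𝒰) {x : Fin d → ℝ} {c : Fin d × V} (hx : x c.1 ≤ (c.2 : ℝ)) :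
    R \ cutOff 𝒰 x c = {u ∈ R | u c.1 ≤ (c.2 : ℝ)} := by
  ext u
  simp only [cutOff, mem_sdiff, mem_filter, hx]
  grind

lemma sdiff_cutOff_of_not_le (hR : R ⊆ 𝒰) {x : Fin d → ℝ} {c : Fin d × V}
    (hx : ¬x c.1 ≤ (c.2 : ℝ)) :
    R \ cutOff 𝒰 x c = {u ∈ R | ¬u c.1 ≤ (c.2 : ℝ)} := by
  ext u
  simp only [cutOff, mem_sdiff, mem_filter, hx]
  grind

lemma splitting_cutOff (hR : R ⊆ 𝒰) (x : Fin d → ℝ) :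
    splitting (cutOff 𝒰 x) R = separating V R := by
  ext c
  rw [mem_splitting, separating, mem_filter_univ]
  by_cases hx : x c.1 ≤ (c.2 : ℝ)
  · rw [sdiff_cutOff_of_le hR hx, filter_ssubset, filter_nonempty_iff (p := fun u ↦ ¬_)]
  · rw [sdiff_cutOff_of_not_le hR hx, filter_ssubset, and_comm]
    simp only [filter_nonempty_iff, not_not]

lemma separating_nonempty (hV : ∀ u ∈ R, ∀ i, u i ∈ V) (hR : R.Nontrivial) :
    (separating V R).Nonempty := by
  obtain ⟨u, hu, v, hv, huv⟩ := hR
  obtain ⟨i, hi⟩ := Function.ne_iff.1 huv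
  wlog hlt : u i < v i generalizing u v
  · exact this v hv u hu huv.symm hi.symm (hi.lt_or_gt.resolve_left hlt)
  exact ⟨(i, ⟨u i, hV u hu i⟩), mem_filter_univ _ |>.2
    ⟨⟨u, mem_filter.2 ⟨hu, le_rfl⟩⟩, ⟨v, mem_filter.2 ⟨hv, hlt.not_ge⟩⟩⟩⟩

lemma exists_separating_sum_survivorMean_le {w : Fin d × V → ℝ} (hw : ∀ c, 0 < w c)
    (hV : ∀ u ∈ R, ∀ i, u i ∈ V) (hR𝒰 : R ⊆ 𝒰) (hR : R.Nontrivial) (X : Finset (Fin d → ℝ))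
    (f : (Fin d → ℝ) → (Fin d → ℝ) → ℝ) :
    ∃ c ∈ separating V R, ∑ x ∈ X, survivorMean w (cutOff 𝒰 x) (f x) (R \ cutOff 𝒰 x c) ≤
      ∑ x ∈ X, survivorMean w (cutOff 𝒰 x) (f x) R := by
  have hne := separating_nonempty hV hR
  have hmean (x : Fin d → ℝ) := sum_splitting_mul_survivorMean (S := cutOff 𝒰 x)
    (splitting_cutOff hR𝒰 x ▸ (sum_pos (fun c _ ↦ hw c) hne).ne') (f x)
  simp only [splitting_cutOff hR𝒰] at hmean
  have hsum : ∑ c ∈ separating V R,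
      w c * ∑ x ∈ X, survivorMean w (cutOff 𝒰 x) (f x) (R \ cutOff 𝒰 x c) =
        ∑ c ∈ separating V R, w c * ∑ x ∈ X, survivorMean w (cutOff 𝒰 x) (f x) R := by
    rw [← sum_mul, mul_sum X, sum_congr rfl fun x _ ↦ hmean x, sum_comm]
    simp only [mul_sum]
  obtain ⟨c, hc, hle⟩ := exists_le_of_sum_le hne hsum.le
  exact ⟨c, hc, le_of_mul_le_mul_left hle (hw c)⟩

lemma sum_survivorMean_sdiff_cutOff (w : Fin d × V → ℝ) (hR : R ⊆ 𝒰) (X : Finset (Fin d → ℝ))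
    (f : (Fin d → ℝ) → (Fin d → ℝ) → ℝ) (c : Fin d × V) :
    ∑ x ∈ X, survivorMean w (cutOff 𝒰 x) (f x) (R \ cutOff 𝒰 x c) =
      ∑ x ∈ X with x c.1 ≤ (c.2 : ℝ),
        survivorMean w (cutOff 𝒰 x) (f x) {u ∈ R | u c.1 ≤ (c.2 : ℝ)} +
      ∑ x ∈ X with ¬x c.1 ≤ (c.2 : ℝ),
        survivorMean w (cutOff 𝒰 x) (f x) {u ∈ R | ¬u c.1 ≤ (c.2 : ℝ)} := by
  rw [← sum_filter_add_sum_filter_not X fun x ↦ x c.1 ≤ (c.2 : ℝ)]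
  congr 1 <;> refine sum_congr rfl fun x hx ↦ ?_
  · rw [sdiff_cutOff_of_le hR (mem_filter.1 hx).2]
  · rw [sdiff_cutOff_of_not_le hR (mem_filter.1 hx).2]

end ThresholdCuts

/-! ### Threshold trees -/

namespace ThresholdTree

variable {d : ℕ}

/-- The tree `T` separates the centers `R`, and `π` assigns to each data point in `X` the center in
its leaf region. -/
def Induces (T : ThresholdTree d) (R X : Finset (Fin d → ℝ)) (π : (Fin d → ℝ) → (Fin d → ℝ)) :
    Prop :=
  T.Separates R ∧ (∀ x ∈ X, π x ∈ R) ∧ ∀ x ∈ X, ∀ B ∈ T.leaves, x ∈ B → π x ∈ B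

lemma induces_leaf (u : Fin d → ℝ) (X : Finset (Fin d → ℝ)) :
    (leaf : ThresholdTree d).Induces {u} X fun _ ↦ u := by
  simp [Induces, Separates, leaves]

lemma Induces.node {i : Fin d} {θ : ℝ} {l r : ThresholdTree d} {R X : Finset (Fin d → ℝ)}
    {πl πr : (Fin d → ℝ) → (Fin d → ℝ)}
    (hl : l.Induces {u ∈ R | u i ≤ θ} {x ∈ X | x i ≤ θ} πl)
    (hr : r.Induces {u ∈ R | ¬u i ≤ θ} {x ∈ X | ¬x i ≤ θ} πr) :
    (node i θ l r).Induces R X fun x ↦ if x i ≤ θ then πl x else πr x := by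
  obtain ⟨hsepl, hmeml, hlvl⟩ := hl
  obtain ⟨hsepr, hmemr, hlvr⟩ := hr
  simp only [mem_filter, not_le, and_imp] at hmeml hlvl hmemr hlvr
  refine ⟨fun B hB ↦ ?_, fun x hx ↦ ?_, fun x hx B hB hxB ↦ ?_⟩
  · simp only [leaves, List.mem_append, List.mem_map] at hB
    obtain ⟨B, hB, rfl⟩ | ⟨B, hB, rfl⟩ := hB
    · exact (existsUnique_congr fun u ↦ by grind).1 (hsepl B hB)
    · exact (existsUnique_congr fun u ↦ by grind).1 (hsepr B hB)
  · grind
  · simp only [leaves, List.mem_append, List.mem_map] at hB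
    obtain ⟨B, hB, rfl⟩ | ⟨B, hB, rfl⟩ := hB
    · have hxi : x i ≤ θ := hxB.2
      simp only [if_pos hxi]
      exact ⟨hlvl x hx hxi B hB hxB.1, (hmeml x hx hxi).2⟩
    · have hxi : θ < x i := hxB.2
      simp only [if_neg hxi.not_ge]
      exact ⟨hlvr x hx hxi B hB hxB.1, (hmemr x hx hxi).2⟩

lemma exists_induces_sum_le {V : Finset ℝ} {w : Fin d × V → ℝ} (hw : ∀ c, 0 < w c)
    (f : (Fin d → ℝ) → (Fin d → ℝ) → ℝ) {𝒰 R : Finset (Fin d → ℝ)}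
    (hV : ∀ u ∈ R, ∀ i, u i ∈ V) (hR𝒰 : R ⊆ 𝒰) (hR : R.Nonempty) (X : Finset (Fin d → ℝ)) :
    ∃ (T : ThresholdTree d) (π : (Fin d → ℝ) → (Fin d → ℝ)), T.Induces R X π ∧
      ∑ x ∈ X, f x (π x) ≤ ∑ x ∈ X, survivorMean w (cutOff 𝒰 x) (f x) R := by
  induction R using Finset.strongInduction generalizing X with
  | H R ih =>
    obtain ⟨u, rfl⟩ | hnontriv := hR.exists_eq_singleton_or_nontrivial
    · exact ⟨leaf, fun _ ↦ u, induces_leaf u X, by simp only [survivorMean_singleton, le_refl]⟩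
    obtain ⟨c, hc, hle⟩ := exists_separating_sum_survivorMean_le hw hV hR𝒰 hnontriv X f
    obtain ⟨hnel, hner⟩ := (mem_filter_univ c).1 hc
    obtain ⟨l, πl, hl, hcostl⟩ := ih {u ∈ R | u c.1 ≤ (c.2 : ℝ)}
      (filter_ssubset.2 (filter_nonempty_iff.1 hner))
      (fun u hu ↦ hV u (mem_of_mem_filter u hu)) ((filter_subset _ _).trans hR𝒰) hnel
      {x ∈ X | x c.1 ≤ (c.2 : ℝ)}
    obtain ⟨r, πr, hr, hcostr⟩ := ih {u ∈ R | ¬u c.1 ≤ (c.2 : ℝ)}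
      (filter_ssubset.2 (by simpa only [not_not] using filter_nonempty_iff.1 hnel))
      (fun u hu ↦ hV u (mem_of_mem_filter u hu)) ((filter_subset _ _).trans hR𝒰) hner
      {x ∈ X | ¬x c.1 ≤ (c.2 : ℝ)}
    refine ⟨node c.1 c.2 l r, _, hl.node hr, le_trans ?_ hle⟩
    rw [sum_survivorMean_sdiff_cutOff w hR𝒰, ← sum_filter_add_sum_filter_not X
      fun x ↦ x c.1 ≤ (c.2 : ℝ)]
    refine add_le_add (hcostl.trans_eq' <| sum_congr rfl fun x hx ↦ ?_)
      (hcostr.trans_eq' <| sum_congr rfl fun x hx ↦ ?_)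
    · rw [if_pos (mem_filter.1 hx).2]
    · rw [if_neg (mem_filter.1 hx).2]

end ThresholdTree

/-- the price of explainability for `k`-medians is at most
`1 + H_{k−1}`: for every reference clustering there is a threshold tree `T`
separating the centers whose induced assignment `π_T` (sending each point to the
unique center sharing its leaf region) has `cost₁(T) ≤ (1 + H_{k−1}) · cost₁(π, 𝒰)`. -/
theorem stmt0 (d k : ℕ) (hd : 1 ≤ d) (hk : 1 ≤ k)
    (𝒳 𝒰 : Finset (Fin d → ℝ)) (hcard : 𝒰.card = k)
    (π : (Fin d → ℝ) → (Fin d → ℝ)) (hπ : ∀ x ∈ 𝒳, π x ∈ 𝒰) :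
    ∃ T : ThresholdTree d, T.Separates 𝒰 ∧
      ∃ πT : (Fin d → ℝ) → (Fin d → ℝ),
        (∀ x ∈ 𝒳, πT x ∈ 𝒰) ∧
        (∀ x ∈ 𝒳, ∀ B ∈ T.leaves, x ∈ B → πT x ∈ B) ∧
        cost1 𝒳 πT ≤ (1 + harm (k - 1)) * cost1 𝒳 π := by
  obtain ⟨w, hpos, hw⟩ := exists_pos_sum_separating_eq_abs_sub
    ((𝒳 ∪ 𝒰).biUnion fun x ↦ univ.image x)
  set V := (𝒳 ∪ 𝒰).biUnion fun x ↦ univ.image x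
  have hV {x : Fin d → ℝ} (hx : x ∈ 𝒳 ∪ 𝒰) (i : Fin d) : x i ∈ V :=
    mem_biUnion.2 ⟨x, hx, mem_image_of_mem x (mem_univ i)⟩
  let W : Fin d × V → ℝ := fun c ↦ w c.2
  have hdist {x u : Fin d → ℝ} (hx : x ∈ 𝒳) (hu : u ∈ 𝒰) :
      cutDist W (cutOff 𝒰 x) u = ∑ i, |x i - u i| :=
    cutDist_cutOff hw (hV (mem_union_left _ hx)) (hV (mem_union_right _ hu)) hu
  obtain ⟨T, πT, ⟨hsep, hmem, hleaf⟩, hcost⟩ := ThresholdTree.exists_induces_sum_le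
    (w := W) (fun c ↦ hpos _ c.2.2) (fun x u ↦ cutDist W (cutOff 𝒰 x) u)
    (fun u hu ↦ hV (mem_union_right 𝒳 hu)) subset_rfl (card_pos.1 (hcard ▸ hk)) 𝒳
  refine ⟨T, hsep, πT, hmem, hleaf, ?_⟩
  calc cost1 𝒳 πT = ∑ x ∈ 𝒳, cutDist W (cutOff 𝒰 x) (πT x) :=
        sum_congr rfl fun x hx ↦ (hdist hx (hmem x hx)).symm
    _ ≤ ∑ x ∈ 𝒳, (1 + harm (k - 1)) * cutDist W (cutOff 𝒰 x) (π x) :=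
        hcost.trans <| sum_le_sum fun x hx ↦ hcard ▸
          survivorMean_cutDist_le (fun c ↦ (hpos _ c.2.2).le) (hπ x hx)
    _ = (1 + harm (k - 1)) * cost1 𝒳 π := by
        rw [← mul_sum, cost1, sum_congr rfl fun x hx ↦ hdist hx (hπ x hx)]
end

section
/- There is a universal constant C > 0 such that for every dimension d ≥ 1, every finite set of data points 𝒳 ⊂ ℝ^d, every set 𝒰 of k ≥ 3 distinct centers in ℝ^d, and every assignment π : 𝒳 → 𝒰, there exists a threshold tree T separating 𝒰 such that cost₂(T) ≤ C · k · ln(ln k) · cost₂(π, 𝒰). In particular, the price of explainability for k-means is at most O(k ln ln k). -/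
/-- The `k`-means cost of an assignment `π` on the data set `𝒳`. -/
noncomputable def cost2 {d : ℕ} (𝒳 : Finset (Fin d → ℝ))
    (π : (Fin d → ℝ) → (Fin d → ℝ)) : ℝ :=
  ∑ x ∈ 𝒳, ∑ i, (x i - π x i) ^ 2

section Gaps

/-- The gaps of a finite set: the pairs of consecutive elements. -/
def gaps {α : Type*} [LinearOrder α] (P : Finset α) : Finset (α × α) :=
  {g ∈ P ×ˢ P | g.1 < g.2 ∧ ∀ z ∈ P, z ≤ g.1 ∨ g.2 ≤ z}

variable {α : Type*} [LinearOrder α] {P : Finset α}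

lemma mem_gaps {g : α × α} :
    g ∈ gaps P ↔ g.1 ∈ P ∧ g.2 ∈ P ∧ g.1 < g.2 ∧ ∀ z ∈ P, z ≤ g.1 ∨ g.2 ≤ z := by
  simp only [gaps, Finset.mem_filter, Finset.mem_product, and_assoc]

lemma fst_lt_snd_of_mem_gaps {g : α × α} (hg : g ∈ gaps P) : g.1 < g.2 :=
  (mem_gaps.1 hg).2.2.1

lemma le_fst_or_snd_le_of_mem_gaps {g : α × α} (hg : g ∈ gaps P) {z : α} (hz : z ∈ P) :
    z ≤ g.1 ∨ g.2 ≤ z :=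
  (mem_gaps.1 hg).2.2.2 z hz

lemma snd_le_fst_or_of_mem_gaps {g h : α × α} (hg : g ∈ gaps P) (hh : h ∈ gaps P) (hne : g ≠ h) :
    g.2 ≤ h.1 ∨ h.2 ≤ g.1 := by
  obtain ⟨hg1, hg2, -, hgP⟩ := mem_gaps.1 hg
  obtain ⟨hh1, hh2, -, hhP⟩ := mem_gaps.1 hh
  by_contra! hcon
  have hfst : g.1 = h.1 :=
    le_antisymm ((hhP _ hg1).resolve_right hcon.2.not_ge) ((hgP _ hh1).resolve_right hcon.1.not_ge)
  have hsnd : g.2 = h.2 :=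
    le_antisymm ((hgP _ hh2).resolve_left hcon.2.not_ge) ((hhP _ hg2).resolve_left hcon.1.not_ge)
  exact hne (Prod.ext hfst hsnd)

lemma gaps_singleton (a : α) : gaps {a} = ∅ := by
  ext g
  simp only [mem_gaps, Finset.mem_singleton, Finset.notMem_empty, iff_false]
  rintro ⟨h1, h2, hlt, -⟩
  exact hlt.ne (h1.trans h2.symm)

lemma gaps_insert_of_max_lt {a : α} (hP : P.Nonempty) (ha : ∀ z ∈ P, z < a) :
    gaps (insert a P) = insert (P.max' hP, a) (gaps P) := by
  have hmax := P.max'_mem hP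
  have hle := P.le_max'
  ext ⟨x, y⟩
  simp only [mem_gaps, Finset.mem_insert, Prod.mk.injEq]
  grind

lemma sum_gaps_sub {G : Type*} [AddCommGroup G] (φ : α → G) (hP : P.Nonempty) :
    ∑ g ∈ gaps P, (φ g.2 - φ g.1) = φ (P.max' hP) - φ (P.min' hP) := by
  induction P using Finset.induction_on_max with
  | empty => exact absurd hP Finset.not_nonempty_empty
  | insert a s ha ih =>
    rcases s.eq_empty_or_nonempty with rfl | hs
    · simp [gaps_singleton]
    have hnotMem : (s.max' hs, a) ∉ gaps s := fun h ↦ (ha a (mem_gaps.1 h).2.1).false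
    rw [gaps_insert_of_max_lt hs ha, Finset.sum_insert hnotMem, ih hs, Finset.max'_insert _ _ hs,
      Finset.min'_insert _ _ hs, max_eq_left (ha _ (s.max'_mem hs)).le,
      min_eq_right (ha _ (s.min'_mem hs)).le, sub_add_sub_cancel]

end Gaps

section GapMass

/-- The threshold `θ` splits `x` and `y` if they lie on different sides of it, with the convention
of `ThresholdTree.leaves` that `θ` itself belongs to the left side. -/
def Splits (θ x y : ℝ) : Prop := ¬ (x ≤ θ ↔ y ≤ θ)

noncomputable instance (θ x y : ℝ) : Decidable (Splits θ x y) :=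
  inferInstanceAs (Decidable (¬ _))

/-- The midpoint of a gap, the only threshold inside the gap which is used for cutting. -/
noncomputable def gapMid (g : ℝ × ℝ) : ℝ := (g.1 + g.2) / 2

/-- The total mass of the gaps of `P` whose midpoint splits `x` and `y`, where a gap has the square
of its width as mass. -/
noncomputable def gapMass (P : Finset ℝ) (x y : ℝ) : ℝ :=
  ∑ g ∈ gaps P with Splits (gapMid g) x y, (g.2 - g.1) ^ 2

variable {P : Finset ℝ} {c u x : ℝ} {g : ℝ × ℝ}

lemma gaps_nonempty (hc : c ∈ P) (hu : u ∈ P) (hne : c ≠ u) : (gaps P).Nonempty := by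
  by_contra! hempty
  have htel := sum_gaps_sub id ⟨c, hc⟩
  rw [hempty, Finset.sum_empty, id, id, eq_comm, sub_eq_zero] at htel
  exact hne (le_antisymm ((P.le_max' c hc).trans (htel.trans_le (P.min'_le u hu)))
    ((P.le_max' u hu).trans (htel.trans_le (P.min'_le c hc))))

lemma fst_lt_gapMid (hg : g ∈ gaps P) : g.1 < gapMid g :=
  left_lt_add_div_two.2 (fst_lt_snd_of_mem_gaps hg)

lemma gapMid_lt_snd (hg : g ∈ gaps P) : gapMid g < g.2 :=
  add_div_two_lt_right.2 (fst_lt_snd_of_mem_gaps hg)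

/-- The projection of the real line to the segment with endpoints `l` and `r`. Telescoping its
increments over the gaps measures how much of this segment the gaps cover. -/
noncomputable def clamp (l r z : ℝ) : ℝ := max (min l r) (min z (max l r))

lemma clamp_mono (l r : ℝ) : Monotone (clamp l r) := fun _ _ h ↦
  max_le_max le_rfl (min_le_min h le_rfl)

lemma clamp_sub_clamp_le {l r y z : ℝ} (h : y ≤ z) : clamp l r z - clamp l r y ≤ z - y := by
  grind [clamp]

lemma clamp_sub_clamp_le_abs (l r y z : ℝ) : clamp l r z - clamp l r y ≤ |l - r| := by
  grind [clamp]

lemma width_le_two_mul_clamp_sub (hc : c ∈ P) (hg : g ∈ gaps P) (hx : Splits (gapMid g) x c) :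
    g.2 - g.1 ≤ 2 * (clamp x c g.2 - clamp x c g.1) := by
  have hlt := fst_lt_snd_of_mem_gaps hg
  have hcg := le_fst_or_snd_le_of_mem_gaps hg hc
  simp only [Splits, gapMid] at hx
  grind [clamp]

lemma sum_width_le_of_splits (hc : c ∈ P) (x : ℝ) :
    ∑ g ∈ gaps P with Splits (gapMid g) x c, (g.2 - g.1) ≤ 2 * |x - c| := by
  have hP : P.Nonempty := ⟨c, hc⟩
  calc ∑ g ∈ gaps P with Splits (gapMid g) x c, (g.2 - g.1)
      ≤ ∑ g ∈ gaps P with Splits (gapMid g) x c, 2 * (clamp x c g.2 - clamp x c g.1) := by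
        refine Finset.sum_le_sum fun g hg ↦ ?_
        rw [Finset.mem_filter] at hg
        exact width_le_two_mul_clamp_sub hc hg.1 hg.2
    _ ≤ ∑ g ∈ gaps P, 2 * (clamp x c g.2 - clamp x c g.1) := by
        refine Finset.sum_le_sum_of_subset_of_nonneg (Finset.filter_subset _ _) fun g hg _ ↦ ?_
        have := clamp_mono x c (fst_lt_snd_of_mem_gaps hg).le
        linarith
    _ = 2 * (clamp x c (P.max' hP) - clamp x c (P.min' hP)) := by
        rw [← Finset.mul_sum, sum_gaps_sub (clamp x c) hP]
    _ ≤ 2 * |x - c| := mul_le_mul_of_nonneg_left (clamp_sub_clamp_le_abs _ _ _ _) zero_le_two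

lemma gapMass_nonneg (P : Finset ℝ) (x y : ℝ) : 0 ≤ gapMass P x y :=
  Finset.sum_nonneg fun _ _ ↦ sq_nonneg _

lemma gapMass_le (hc : c ∈ P) (x : ℝ) : gapMass P x c ≤ 4 * (x - c) ^ 2 := by
  have hwidth : ∀ g ∈ ({g ∈ gaps P | Splits (gapMid g) x c} : Finset _), 0 ≤ g.2 - g.1 :=
    fun g hg ↦ sub_nonneg.2 (fst_lt_snd_of_mem_gaps (Finset.mem_filter.1 hg).1).le
  calc gapMass P x c
      ≤ (∑ g ∈ gaps P with Splits (gapMid g) x c, (g.2 - g.1)) ^ 2 :=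
        Finset.sum_sq_le_sq_sum_of_nonneg hwidth
    _ ≤ (2 * |x - c|) ^ 2 :=
        pow_le_pow_left₀ (Finset.sum_nonneg hwidth) (sum_width_le_of_splits hc x) 2
    _ = 4 * (x - c) ^ 2 := by rw [mul_pow, sq_abs]; norm_num

/-- The gaps of `P` which split `u` from `c` and otherwise split from `c` only points at least half
as far away from `c` as `u`. -/
noncomputable def farGaps (P : Finset ℝ) (c u : ℝ) : Finset (ℝ × ℝ) :=
  {g ∈ gaps P | Splits (gapMid g) u c ∧ ∀ v ∈ P, Splits (gapMid g) v c → |u - c| ≤ 2 * |v - c|}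

lemma clamp_eq_of_notMem_farGaps (hc : c ∈ P) (hu : u ∈ P) (hg : g ∈ gaps P)
    (hfar : g ∉ farGaps P c u) : clamp ((c + u) / 2) u g.2 = clamp ((c + u) / 2) u g.1 := by
  by_contra hne
  have hlt := fst_lt_snd_of_mem_gaps hg
  have hcg := le_fst_or_snd_le_of_mem_gaps hg hc
  have hug := le_fst_or_snd_le_of_mem_gaps hg hu
  refine hfar (Finset.mem_filter.2 ⟨hg, ?_, fun v hv hsplit ↦ ?_⟩)
  · simp only [Splits, gapMid]
    grind [clamp]
  · have hvg := le_fst_or_snd_le_of_mem_gaps hg hv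
    simp only [Splits, gapMid] at hsplit
    grind [clamp]

-- The far gaps cover the half of the segment from `c` to `u` which is adjacent to `u`.
lemma abs_sub_div_two_le_sum_farGaps (hc : c ∈ P) (hu : u ∈ P) :
    |u - c| / 2 ≤ ∑ g ∈ farGaps P c u, (g.2 - g.1) := by
  have hP : P.Nonempty := ⟨c, hc⟩
  set φ : ℝ → ℝ := clamp ((c + u) / 2) u
  calc |u - c| / 2 = φ (P.max' hP) - φ (P.min' hP) := by
        have := P.le_max' c hc
        have := P.le_max' u hu
        have := P.min'_le c hc
        have := P.min'_le u hu
        grind [clamp]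
    _ = ∑ g ∈ gaps P, (φ g.2 - φ g.1) := (sum_gaps_sub φ hP).symm
    _ = ∑ g ∈ farGaps P c u, (φ g.2 - φ g.1) :=
        (Finset.sum_subset (Finset.filter_subset _ _) fun g hg hfar ↦
          sub_eq_zero.2 (clamp_eq_of_notMem_farGaps hc hu hg hfar)).symm
    _ ≤ ∑ g ∈ farGaps P c u, (g.2 - g.1) := Finset.sum_le_sum fun g hg ↦
        clamp_sub_clamp_le (fst_lt_snd_of_mem_gaps (Finset.mem_filter.1 hg).1).le

end GapMass

section Harmonic

lemma one_div_add_one_le_log_sub_log {x : ℝ} (hx : 0 < x) :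
    1 / (x + 1) ≤ Real.log (x + 1) - Real.log x := by
  have h := Real.one_sub_inv_le_log_of_pos (x := (x + 1) / x) (by positivity)
  rw [Real.log_div (by positivity) hx.ne'] at h
  refine le_trans (le_of_eq ?_) h
  field_simp
  ring

lemma sum_Icc_one_div_add_le_log {q : ℝ} (hq : 0 < q) (N : ℕ) :
    ∑ n ∈ Finset.Icc 1 N, 1 / ((n : ℝ) + q) ≤ Real.log (1 + N / q) := by
  rw [one_add_div hq.ne', Real.log_div (by positivity) hq.ne']
  induction N with
  | zero => simp
  | succ N ih =>
    have hstep := one_div_add_one_le_log_sub_log (x := q + N) (by positivity)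
    rw [Finset.sum_Icc_succ_top (Nat.le_add_left 1 N)]
    push_cast
    rw [show (N : ℝ) + 1 + q = q + N + 1 by ring, ← add_assoc]
    linarith

lemma sum_one_div_add_le_log_of_injOn {ι : Type*} {s : Finset ι} {n : ι → ℕ} {N : ℕ} {q : ℝ}
    (hq : 0 < q) (hinj : Set.InjOn n s) (hn : ∀ i ∈ s, n i ∈ Finset.Icc 1 N) :
    ∑ i ∈ s, 1 / ((n i : ℝ) + q) ≤ Real.log (1 + N / q) := by
  calc ∑ i ∈ s, 1 / ((n i : ℝ) + q) = ∑ j ∈ s.image n, 1 / ((j : ℝ) + q) :=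
        (Finset.sum_image (f := fun j : ℕ ↦ 1 / ((j : ℝ) + q)) hinj).symm
    _ ≤ ∑ j ∈ Finset.Icc 1 N, 1 / ((j : ℝ) + q) :=
        Finset.sum_le_sum_of_subset_of_nonneg (Finset.image_subset_iff.2 hn)
          fun j _ _ ↦ by positivity
    _ ≤ Real.log (1 + N / q) := sum_Icc_one_div_add_le_log hq N

end Harmonic

section Spread

variable {V : Type*} {U : Finset V} {f : V → ℝ} {c u : V}

/-- The points of `U` whose values under `f` are split from the value at `c` by the gap `g`. -/
noncomputable def splitOff (U : Finset V) (f : V → ℝ) (c : V) (g : ℝ × ℝ) : Finset V :=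
  {v ∈ U | Splits (gapMid g) (f v) (f c)}

lemma splitOff_ssubset {g h : ℝ × ℝ} (hg : g ∈ gaps (U.image f)) (hh : h ∈ gaps (U.image f))
    (hug : Splits (gapMid g) (f u) (f c)) (huh : Splits (gapMid h) (f u) (f c)) (hgh : g.2 ≤ h.1) :
    splitOff U f c h ⊂ splitOff U f c g ∨ splitOff U f c g ⊂ splitOff U f c h := by
  obtain ⟨v, hv, hvg⟩ := Finset.mem_image.1 (mem_gaps.1 hg).2.1
  have hgv : gapMid g < f v := hvg ▸ gapMid_lt_snd hg
  have hvh : f v < gapMid h := hvg ▸ hgh.trans_lt (fst_lt_gapMid hh)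
  simp only [Finset.ssubset_def, Finset.subset_iff, splitOff, Finset.mem_filter, not_forall]
  rcases le_or_gt (f c) (gapMid g) with hcg | hcg
  · exact .inl ⟨by grind [Splits], v, by grind [Splits]⟩
  · exact .inr ⟨by grind [Splits], v, by grind [Splits]⟩

lemma card_splitOff_injOn : Set.InjOn (fun g ↦ (splitOff U f c g).card)
    {g ∈ gaps (U.image f) | Splits (gapMid g) (f u) (f c)} := by
  rintro g ⟨hg, hug⟩ h ⟨hh, huh⟩ hcard
  by_contra hne
  rcases snd_le_fst_or_of_mem_gaps hg hh hne with hle | hle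
  · rcases splitOff_ssubset hg hh hug huh hle with hss | hss
    · exact (Finset.card_lt_card hss).ne' hcard
    · exact (Finset.card_lt_card hss).ne hcard
  · rcases splitOff_ssubset hh hg huh hug hle with hss | hss
    · exact (Finset.card_lt_card hss).ne hcard
    · exact (Finset.card_lt_card hss).ne' hcard

lemma sum_gaps_card_splitOff :
    ∑ g ∈ gaps (U.image f), (g.2 - g.1) ^ 2 * ((splitOff U f c g).card : ℝ) =
      ∑ v ∈ U, gapMass (U.image f) (f v) (f c) := by
  simp only [gapMass, splitOff, Finset.sum_filter]
  rw [Finset.sum_comm]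
  refine Finset.sum_congr rfl fun g _ ↦ ?_
  rw [← Finset.sum_filter, Finset.sum_const, nsmul_eq_mul, mul_comm]

lemma card_splitOff_mem_Icc (hu : u ∈ U) {g : ℝ × ℝ} (hg : g ∈ farGaps (U.image f) (f c) (f u)) :
    (splitOff U f c g).card ∈ Finset.Icc 1 {v ∈ U | |f u - f c| ≤ 2 * |f v - f c|}.card := by
  obtain ⟨-, hsplit, hfar⟩ := Finset.mem_filter.1 hg
  refine Finset.mem_Icc.2 ⟨Finset.card_pos.2 ⟨u, Finset.mem_filter.2 ⟨hu, hsplit⟩⟩,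
    Finset.card_le_card fun v hv ↦ ?_⟩
  obtain ⟨hv, hvsplit⟩ := Finset.mem_filter.1 hv
  exact Finset.mem_filter.2 ⟨hv, hfar _ (Finset.mem_image_of_mem f hv) hvsplit⟩

-- Cauchy–Schwarz over the far gaps, with the numbers of points split off by them as weights: these
-- numbers are distinct, so that their inverses have a logarithmic sum.
lemma sq_sub_le {q : ℝ} (hq : 0 < q) (hc : c ∈ U) (hu : u ∈ U) :
    (f u - f c) ^ 2 ≤
      4 * Real.log (1 + ({v ∈ U | |f u - f c| ≤ 2 * |f v - f c|}.card : ℕ) / q) *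
        (∑ v ∈ U, gapMass (U.image f) (f v) (f c) + q * gapMass (U.image f) (f u) (f c)) := by
  set N := {v ∈ U | |f u - f c| ≤ 2 * |f v - f c|}.card
  set F := farGaps (U.image f) (f c) (f u)
  set n : ℝ × ℝ → ℕ := fun g ↦ (splitOff U f c g).card
  have hsplit : F ⊆ {g ∈ gaps (U.image f) | Splits (gapMid g) (f u) (f c)} := fun g hg ↦ by
    have := Finset.mem_filter.1 hg
    exact Finset.mem_filter.2 ⟨this.1, this.2.1⟩
  have hinv : ∑ g ∈ F, 1 / ((n g : ℝ) + q) ≤ Real.log (1 + N / q) :=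
    sum_one_div_add_le_log_of_injOn hq
      (card_splitOff_injOn.mono fun g hg ↦ Finset.mem_filter.1 (hsplit hg))
      fun g hg ↦ card_splitOff_mem_Icc hu hg
  have hmass : ∑ g ∈ F, (g.2 - g.1) ^ 2 * ((n g : ℝ) + q) ≤
      ∑ v ∈ U, gapMass (U.image f) (f v) (f c) + q * gapMass (U.image f) (f u) (f c) := by
    simp only [mul_add, Finset.sum_add_distrib]
    rw [← sum_gaps_card_splitOff, gapMass, Finset.mul_sum]
    gcongr ?_ + ?_
    · exact Finset.sum_le_sum_of_subset_of_nonneg (hsplit.trans (Finset.filter_subset _ _))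
        fun _ _ _ ↦ by positivity
    · simp only [mul_comm q]
      exact Finset.sum_le_sum_of_subset_of_nonneg hsplit fun _ _ _ ↦ by positivity
  have hcauchy : (∑ g ∈ F, (g.2 - g.1)) ^ 2 ≤
      (∑ g ∈ F, 1 / ((n g : ℝ) + q)) * ∑ g ∈ F, (g.2 - g.1) ^ 2 * ((n g : ℝ) + q) :=
    Finset.sum_sq_le_sum_mul_sum_of_sq_le_mul F (fun _ _ ↦ by positivity)
      (fun _ _ ↦ by positivity) fun g _ ↦ le_of_eq (by field_simp)
  have hhalf := abs_sub_div_two_le_sum_farGaps (Finset.mem_image_of_mem f hc)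
    (Finset.mem_image_of_mem f hu)
  calc (f u - f c) ^ 2 = 4 * (|f u - f c| / 2) ^ 2 := by rw [div_pow, sq_abs]; ring
    _ ≤ 4 * (∑ g ∈ F, (g.2 - g.1)) ^ 2 := by gcongr
    _ ≤ 4 * (Real.log (1 + N / q) * (∑ v ∈ U, gapMass (U.image f) (f v) (f c) +
          q * gapMass (U.image f) (f u) (f c))) := by
        refine mul_le_mul_of_nonneg_left (hcauchy.trans ?_) zero_le_four
        exact mul_le_mul hinv hmass (Finset.sum_nonneg fun _ _ ↦ by positivity)
          (Real.log_nonneg (le_add_of_nonneg_right (by positivity)))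
    _ = _ := by ring

lemma sq_sub_mul_card_le :
    (f u - f c) ^ 2 * ({v ∈ U | |f u - f c| ≤ 2 * |f v - f c|}.card : ℕ) ≤
      4 * ∑ v ∈ U, (f v - f c) ^ 2 := by
  rw [Finset.mul_sum, mul_comm, ← nsmul_eq_mul]
  refine (Finset.card_nsmul_le_sum _ _ _ fun v hv ↦ ?_).trans
    (Finset.sum_le_sum_of_subset_of_nonneg (Finset.filter_subset _ _) fun _ _ _ ↦ by positivity)
  have hsq := pow_le_pow_left₀ (abs_nonneg _) (Finset.mem_filter.1 hv).2 2
  rw [mul_pow, sq_abs, sq_abs] at hsq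
  linarith

lemma sq_sub_le_log_mul_add {q M : ℝ} (hq : 0 < q) (hM : 0 < M) (hc : c ∈ U) (hu : u ∈ U) :
    (f u - f c) ^ 2 ≤
      4 * Real.log (1 + M) * (∑ v ∈ U, gapMass (U.image f) (f v) (f c) +
        q * gapMass (U.image f) (f u) (f c)) + 4 * (∑ v ∈ U, (f v - f c) ^ 2) / (q * M) := by
  set N := {v ∈ U | |f u - f c| ≤ 2 * |f v - f c|}.card
  have hmass : 0 ≤ ∑ v ∈ U, gapMass (U.image f) (f v) (f c) +
      q * gapMass (U.image f) (f u) (f c) :=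
    add_nonneg (Finset.sum_nonneg fun _ _ ↦ gapMass_nonneg _ _ _)
      (mul_nonneg hq.le (gapMass_nonneg _ _ _))
  rcases le_or_gt (N : ℝ) (q * M) with hN | hN
  · refine (sq_sub_le hq hc hu).trans (le_add_of_le_of_nonneg ?_ (by positivity))
    gcongr
    exact (div_le_iff₀' hq).2 hN
  · refine le_add_of_nonneg_of_le
      (mul_nonneg (mul_nonneg zero_le_four (Real.log_nonneg (by linarith))) hmass) ?_
    rw [le_div_iff₀ (by positivity)]
    exact (mul_le_mul_of_nonneg_left hN.le (sq_nonneg _)).trans sq_sub_mul_card_le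

end Spread

section Cuts

/-- The squared Euclidean distance; the type `ι → ℝ` carries the supremum distance. -/
def sqDist {ι : Type*} [Fintype ι] (x y : ι → ℝ) : ℝ := ∑ i, (x i - y i) ^ 2

/-- An axis-parallel cut, given by its coordinate and by a gap between the values of the centers in
this coordinate. The cut is made at the midpoint of the gap. -/
abbrev GapCut (ι : Type*) := Σ _ : ι, ℝ × ℝ

namespace GapCut

variable {ι : Type*}

/-- The threshold at which a cut is made. -/
noncomputable def threshold (t : GapCut ι) : ℝ := gapMid t.2

/-- The mass of a cut in the averaging argument that selects a good one. -/
def weight (t : GapCut ι) : ℝ := (t.2.2 - t.2.1) ^ 2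

/-- The cut `t` separates the points `x` and `y`. -/
def Separates (t : GapCut ι) (x y : ι → ℝ) : Prop := Splits t.threshold (x t.1) (y t.1)

noncomputable instance (t : GapCut ι) (x y : ι → ℝ) : Decidable (t.Separates x y) :=
  inferInstanceAs (Decidable (Splits _ _ _))

end GapCut

variable {ι : Type*} {U : Finset (ι → ℝ)} {c u : ι → ℝ}

/-- The points of `U` which the cut `t` leaves on the same side as `c`. -/
noncomputable def side (U : Finset (ι → ℝ)) (c : ι → ℝ) (t : GapCut ι) : Finset (ι → ℝ) :=
  {v ∈ U | ¬ t.Separates v c}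

variable [Fintype ι]

/-- The cuts at the gaps between the points of `U`. -/
noncomputable def cuts (U : Finset (ι → ℝ)) : Finset (GapCut ι) :=
  Finset.univ.sigma fun i ↦ gaps (U.image (· i))

/-- The total weight of the cuts of `U` separating `x` from `y`. -/
noncomputable def cutMass (U : Finset (ι → ℝ)) (x y : ι → ℝ) : ℝ :=
  ∑ t ∈ cuts U with t.Separates x y, t.weight

lemma sqDist_nonneg (x y : ι → ℝ) : 0 ≤ sqDist x y := Finset.sum_nonneg fun _ _ ↦ sq_nonneg _

lemma sqDist_le_two_mul_add (x u c : ι → ℝ) : sqDist x u ≤ 2 * sqDist x c + 2 * sqDist u c := by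
  simp only [sqDist, Finset.mul_sum, ← Finset.sum_add_distrib]
  refine Finset.sum_le_sum fun i _ ↦ ?_
  linarith [sq_nonneg (x i - c i + (u i - c i))]

lemma weight_pos {t : GapCut ι} (ht : t ∈ cuts U) : 0 < t.weight :=
  pow_pos (sub_pos.2 (fst_lt_snd_of_mem_gaps (Finset.mem_sigma.1 ht).2)) 2

lemma cuts_nonempty (hU : 1 < U.card) : (cuts U).Nonempty := by
  obtain ⟨c, hc, u, hu, hne⟩ := Finset.one_lt_card.1 hU
  obtain ⟨i, hi⟩ := Function.ne_iff.1 hne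
  obtain ⟨g, hg⟩ := gaps_nonempty (Finset.mem_image_of_mem (· i) hc)
    (Finset.mem_image_of_mem (· i) hu) hi
  exact ⟨⟨i, g⟩, Finset.mem_sigma.2 ⟨Finset.mem_univ i, hg⟩⟩

lemma cutMass_eq_sum_gapMass (U : Finset (ι → ℝ)) (x y : ι → ℝ) :
    cutMass U x y = ∑ i, gapMass (U.image (· i)) (x i) (y i) := by
  simp only [cutMass, gapMass, cuts, Finset.sum_filter, Finset.sum_sigma]
  rfl

lemma cutMass_nonneg (U : Finset (ι → ℝ)) (x y : ι → ℝ) : 0 ≤ cutMass U x y :=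
  Finset.sum_nonneg fun _ _ ↦ sq_nonneg _

lemma cutMass_le (hc : c ∈ U) (x : ι → ℝ) : cutMass U x c ≤ 4 * sqDist x c := by
  rw [cutMass_eq_sum_gapMass, sqDist, Finset.mul_sum]
  exact Finset.sum_le_sum fun i _ ↦ gapMass_le (Finset.mem_image_of_mem _ hc) _

lemma sum_weight_mul_sum_separates (U X : Finset (ι → ℝ)) (σ : (ι → ℝ) → ι → ℝ)
    (F : (ι → ℝ) → ℝ) :
    ∑ t ∈ cuts U, t.weight * ∑ x ∈ X with t.Separates x (σ x), F x =
      ∑ x ∈ X, F x * cutMass U x (σ x) := by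
  simp only [cutMass, Finset.sum_filter, Finset.mul_sum]
  rw [Finset.sum_comm]
  refine Finset.sum_congr rfl fun x _ ↦ Finset.sum_congr rfl fun t _ ↦ ?_
  split_ifs <;> ring

lemma sqDist_le_log_mul_add {q M : ℝ} (hq : 0 < q) (hM : 0 < M) (hc : c ∈ U) (hu : u ∈ U) :
    sqDist u c ≤ 4 * Real.log (1 + M) * (∑ v ∈ U, cutMass U v c + q * cutMass U u c) +
      4 * (∑ v ∈ U, sqDist v c) / (q * M) := by
  simp only [cutMass_eq_sum_gapMass, sqDist]
  rw [Finset.sum_comm, Finset.sum_comm (s := U)]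
  simp only [Finset.mul_sum, ← Finset.sum_add_distrib, Finset.sum_div]
  refine Finset.sum_le_sum fun i _ ↦ ?_
  have h := sq_sub_le_log_mul_add (f := (· i)) hq hM hc hu
  simpa only [Finset.mul_sum, Finset.sum_div] using h

-- The choice `q = 8 B / (M b)` absorbs half of `b := sqDist u c` into the left-hand side.
lemma mul_sq_sqDist_le {M : ℝ} (hM : 0 < M) (hc : c ∈ U) (hu : u ∈ U) (hb : 0 < sqDist u c)
    (hS : 16 * Real.log (1 + M) * ∑ v ∈ U, cutMass U v c ≤ sqDist u c) :
    M * sqDist u c ^ 2 ≤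
      128 * Real.log (1 + M) * (∑ v ∈ U, sqDist v c) * cutMass U u c := by
  set b := sqDist u c
  set B := ∑ v ∈ U, sqDist v c
  have hB : 0 < B := hb.trans_le (Finset.single_le_sum (fun v _ ↦ sqDist_nonneg v c) hu)
  have h := sqDist_le_log_mul_add (q := 8 * B / (M * b)) (by positivity) hM hc hu
  have habsorb : 4 * B / (8 * B / (M * b) * M) = b / 2 := by field_simp; norm_num
  have hquarter : b ≤ 128 * Real.log (1 + M) * B * cutMass U u c / (M * b) := by
    rw [habsorb] at h
    linear_combination 4 * h + hS
  rw [le_div_iff₀ (by positivity)] at hquarter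
  linarith

end Cuts

section Potential

variable {ι : Type*} [Fintype ι] {U : Finset (ι → ℝ)} {c v : ι → ℝ}

/-- The largest squared distance of a point of `U` from `c`, and `0` if `U` is empty. -/
noncomputable def radius (U : Finset (ι → ℝ)) (c : ι → ℝ) : ℝ := ⨆ v : U, sqDist v c

lemma sqDist_le_radius (hv : v ∈ U) : sqDist v c ≤ radius U c :=
  le_ciSup (f := fun v : U ↦ sqDist (v : ι → ℝ) c) (Set.finite_range _).bddAbove ⟨v, hv⟩

lemma exists_sqDist_eq_radius (hU : U.Nonempty) (c : ι → ℝ) : ∃ v ∈ U, sqDist v c = radius U c := by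
  have := hU.to_subtype
  obtain ⟨v, hv⟩ := exists_eq_ciSup_of_finite (f := fun v : U ↦ sqDist (v : ι → ℝ) c)
  exact ⟨v, v.2, hv⟩

lemma radius_nonneg (U : Finset (ι → ℝ)) (c : ι → ℝ) : 0 ≤ radius U c :=
  Real.iSup_nonneg fun _ ↦ sqDist_nonneg _ _

/-- A function of a set `U` of centers and a center `c ∈ U` whose expected drop under a random cut
of `U`, chosen with probability proportional to its weight, pays for the data points that are cut
off from their center `c`: their new centers have squared distance at most `radius U c` from `c`. -/
structure IsCutPotential (𝒰 : Finset (ι → ℝ)) (Φ : Finset (ι → ℝ) → (ι → ℝ) → ℝ) : Prop where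
  nonneg : ∀ U c, 0 ≤ Φ U c
  radius_le_sum_drop : ∀ U ⊆ 𝒰, ∀ c ∈ U,
    8 * radius U c ≤ ∑ t ∈ cuts U, t.weight * (Φ U c - Φ (side U c t) c)

variable {𝒰 : Finset (ι → ℝ)} {Φ : Finset (ι → ℝ) → (ι → ℝ) → ℝ}

lemma IsCutPotential.exists_cut (hΦ : IsCutPotential 𝒰 Φ) (hU : U ⊆ 𝒰) (hcard : 1 < U.card)
    {X : Finset (ι → ℝ)} {π : (ι → ℝ) → ι → ℝ} (hπ : ∀ x ∈ X, π x ∈ U) :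
    ∃ t ∈ cuts U, ∑ x ∈ X with t.Separates x (π x), 2 * radius U (π x) ≤
      ∑ x ∈ X, (Φ U (π x) - Φ (side U (π x) t) (π x)) * sqDist x (π x) := by
  have haverage : ∑ t ∈ cuts U, t.weight * ∑ x ∈ X with t.Separates x (π x), 2 * radius U (π x) ≤
      ∑ t ∈ cuts U, t.weight *
        ∑ x ∈ X, (Φ U (π x) - Φ (side U (π x) t) (π x)) * sqDist x (π x) := by
    calc ∑ t ∈ cuts U, t.weight * ∑ x ∈ X with t.Separates x (π x), 2 * radius U (π x)
        = ∑ x ∈ X, 2 * radius U (π x) * cutMass U x (π x) :=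
          sum_weight_mul_sum_separates U X π fun x ↦ 2 * radius U (π x)
      _ ≤ ∑ x ∈ X, (∑ t ∈ cuts U, t.weight * (Φ U (π x) - Φ (side U (π x) t) (π x))) *
            sqDist x (π x) := by
          refine Finset.sum_le_sum fun x hx ↦ ?_
          calc 2 * radius U (π x) * cutMass U x (π x)
              ≤ 2 * radius U (π x) * (4 * sqDist x (π x)) :=
                mul_le_mul_of_nonneg_left (cutMass_le (hπ x hx) x)
                  (mul_nonneg zero_le_two (radius_nonneg _ _))
            _ = 8 * radius U (π x) * sqDist x (π x) := by ring
            _ ≤ _ := mul_le_mul_of_nonneg_right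
                (hΦ.radius_le_sum_drop U hU _ (hπ x hx)) (sqDist_nonneg _ _)
      _ = _ := by
          simp only [Finset.sum_mul, Finset.mul_sum, mul_assoc]
          exact Finset.sum_comm
  obtain ⟨t, ht, hle⟩ := Finset.exists_le_of_sum_le (cuts_nonempty hcard) haverage
  exact ⟨t, ht, le_of_mul_le_mul_left hle (weight_pos ht)⟩

lemma IsCutPotential.sum_sqDist_le (hΦ : IsCutPotential 𝒰 Φ) {t : GapCut ι} {X : Finset (ι → ℝ)}
    {π h : (ι → ℝ) → ι → ℝ} (hh : ∀ x ∈ X, h x ∈ U)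
    (hcut : ∑ x ∈ X with t.Separates x (π x), 2 * radius U (π x) ≤
      ∑ x ∈ X, (Φ U (π x) - Φ (side U (π x) t) (π x)) * sqDist x (π x))
    (hsame : ∑ x ∈ X with ¬ t.Separates x (π x), sqDist x (h x) ≤
      ∑ x ∈ X with ¬ t.Separates x (π x), (2 + Φ (side U (π x) t) (π x)) * sqDist x (π x)) :
    ∑ x ∈ X, sqDist x (h x) ≤ ∑ x ∈ X, (2 + Φ U (π x)) * sqDist x (π x) := by
  have hsep : ∑ x ∈ X with t.Separates x (π x), sqDist x (h x) ≤
      ∑ x ∈ X with t.Separates x (π x), (2 + Φ (side U (π x) t) (π x)) * sqDist x (π x) +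
        ∑ x ∈ X with t.Separates x (π x), 2 * radius U (π x) := by
    rw [← Finset.sum_add_distrib]
    refine Finset.sum_le_sum fun x hx ↦ ?_
    replace hx := (Finset.mem_filter.1 hx).1
    have hradius := sqDist_le_radius (c := π x) (hh x hx)
    have hside := mul_nonneg (hΦ.nonneg (side U (π x) t) (π x)) (sqDist_nonneg x (π x))
    linarith [sqDist_le_two_mul_add x (h x) (π x)]
  calc ∑ x ∈ X, sqDist x (h x)
      ≤ ∑ x ∈ X, (2 + Φ (side U (π x) t) (π x)) * sqDist x (π x) +
          ∑ x ∈ X, (Φ U (π x) - Φ (side U (π x) t) (π x)) * sqDist x (π x) := by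
        rw [← Finset.sum_filter_add_sum_filter_not X (fun x ↦ t.Separates x (π x)),
          ← Finset.sum_filter_add_sum_filter_not X (fun x ↦ t.Separates x (π x))
            fun x ↦ (2 + Φ (side U (π x) t) (π x)) * sqDist x (π x)]
        linarith
    _ = ∑ x ∈ X, (2 + Φ U (π x)) * sqDist x (π x) := by
        rw [← Finset.sum_add_distrib]
        exact Finset.sum_congr rfl fun x _ ↦ by ring

end Potential

namespace ThresholdTree

variable {d : ℕ} {U : Finset (Fin d → ℝ)} {i : Fin d} {θ : ℝ} {l r : ThresholdTree d}
  {f g : (Fin d → ℝ) → Fin d → ℝ}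

/-- The map `f` sends every point to a point of `U` lying in the same leaf regions. -/
def IsAssignment (T : ThresholdTree d) (U : Finset (Fin d → ℝ))
    (f : (Fin d → ℝ) → Fin d → ℝ) : Prop :=
  ∀ x, f x ∈ U ∧ ∀ B ∈ T.leaves, x ∈ B → f x ∈ B

lemma separates_leaf_singleton (c : Fin d → ℝ) : leaf.Separates {c} := by
  simp [Separates, leaves]

lemma isAssignment_leaf_singleton (c : Fin d → ℝ) : leaf.IsAssignment {c} fun _ ↦ c := by
  simp [IsAssignment, leaves]

lemma Separates.node (hl : l.Separates {v ∈ U | v i ≤ θ}) (hr : r.Separates {v ∈ U | θ < v i}) :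
    (node i θ l r).Separates U := by
  simp only [Separates, leaves, List.mem_append, List.mem_map]
  rintro _ (⟨B, hB, rfl⟩ | ⟨B, hB, rfl⟩)
  · simpa only [Finset.mem_filter, Set.mem_inter_iff, Set.mem_ofPred_eq, and_assoc, and_comm,
      and_left_comm] using hl B hB
  · simpa only [Finset.mem_filter, Set.mem_inter_iff, Set.mem_ofPred_eq, and_assoc, and_comm,
      and_left_comm] using hr B hB

lemma IsAssignment.node (hf : l.IsAssignment {v ∈ U | v i ≤ θ} f)
    (hg : r.IsAssignment {v ∈ U | θ < v i} g) :
    (node i θ l r).IsAssignment U fun x ↦ if x i ≤ θ then f x else g x := by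
  simp only [IsAssignment, leaves, List.mem_append, List.mem_map, Finset.mem_filter] at *
  refine fun x ↦ ⟨by grind, ?_⟩
  rintro _ (⟨B, hB, rfl⟩ | ⟨B, hB, rfl⟩) ⟨hxB, hx⟩
  · rw [if_pos (show x i ≤ θ from hx)]
    exact ⟨(hf x).2 B hB hxB, (hf x).1.2⟩
  · rw [if_neg (not_le.2 (show θ < x i from hx))]
    exact ⟨(hg x).2 B hB hxB, (hg x).1.2⟩

end ThresholdTree

section Tree

variable {d : ℕ} {U 𝒰 X : Finset (Fin d → ℝ)} {c : Fin d → ℝ} {t : GapCut (Fin d)}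
  {Φ : Finset (Fin d → ℝ) → (Fin d → ℝ) → ℝ} {π : (Fin d → ℝ) → Fin d → ℝ}

lemma exists_le_threshold (ht : t ∈ cuts U) : ∃ v ∈ U, v t.1 ≤ t.threshold := by
  have hg := (Finset.mem_sigma.1 ht).2
  obtain ⟨v, hv, hvt⟩ := Finset.mem_image.1 (mem_gaps.1 hg).1
  exact ⟨v, hv, (hvt.trans_lt (fst_lt_gapMid hg)).le⟩

lemma exists_threshold_lt (ht : t ∈ cuts U) : ∃ v ∈ U, t.threshold < v t.1 := by
  have hg := (Finset.mem_sigma.1 ht).2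
  obtain ⟨v, hv, hvt⟩ := Finset.mem_image.1 (mem_gaps.1 hg).2.1
  exact ⟨v, hv, (gapMid_lt_snd hg).trans_eq hvt.symm⟩

lemma filter_le_threshold_eq_side (hc : c t.1 ≤ t.threshold) :
    {v ∈ U | v t.1 ≤ t.threshold} = side U c t :=
  Finset.filter_congr fun v _ ↦ by simp only [GapCut.Separates, Splits, hc, iff_true, not_not]

lemma filter_threshold_lt_eq_side (hc : t.threshold < c t.1) :
    {v ∈ U | t.threshold < v t.1} = side U c t :=
  Finset.filter_congr fun v _ ↦ by
    simp only [GapCut.Separates, Splits, hc.not_ge, iff_false, not_not, not_le]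

lemma sum_filter_not_separates (F : (Fin d → ℝ) → ℝ) :
    ∑ x ∈ X with ¬ t.Separates x (π x), F x =
      ∑ x ∈ X with x t.1 ≤ t.threshold ∧ π x t.1 ≤ t.threshold, F x +
        ∑ x ∈ X with t.threshold < x t.1 ∧ t.threshold < π x t.1, F x := by
  simp only [Finset.sum_filter, ← Finset.sum_add_distrib]
  refine Finset.sum_congr rfl fun x _ ↦ ?_
  simp only [GapCut.Separates, Splits]
  grind

theorem IsCutPotential.exists_tree (hΦ : IsCutPotential 𝒰 Φ) (hne : U.Nonempty) (hU : U ⊆ 𝒰)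
    (hπ : ∀ x ∈ X, π x ∈ U) :
    ∃ T : ThresholdTree d, T.Separates U ∧ ∃ f, T.IsAssignment U f ∧
      ∑ x ∈ X, sqDist x (f x) ≤ ∑ x ∈ X, (2 + Φ U (π x)) * sqDist x (π x) := by
  induction U using Finset.strongInduction generalizing X with
  | H U ih =>
  rcases hne.exists_eq_singleton_or_nontrivial with ⟨c, rfl⟩ | hnontriv
  · refine ⟨.leaf, ThresholdTree.separates_leaf_singleton c, fun _ ↦ c,
      ThresholdTree.isAssignment_leaf_singleton c, Finset.sum_le_sum fun x hx ↦ ?_⟩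
    have hc := hΦ.nonneg {c} (π x)
    rw [Finset.mem_singleton.1 (hπ x hx)] at hc ⊢
    exact le_mul_of_one_le_left (sqDist_nonneg _ _) (by linarith)
  obtain ⟨t, ht, hcut⟩ := hΦ.exists_cut hU (Finset.one_lt_card_iff_nontrivial.2 hnontriv) hπ
  obtain ⟨u, hu, hut⟩ := exists_le_threshold ht
  obtain ⟨v, hv, hvt⟩ := exists_threshold_lt ht
  obtain ⟨l, hl, f, hf, hfle⟩ := ih {v ∈ U | v t.1 ≤ t.threshold}
    (Finset.filter_ssubset.2 ⟨v, hv, hvt.not_ge⟩)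
    ⟨u, Finset.mem_filter.2 ⟨hu, hut⟩⟩ ((Finset.filter_subset _ _).trans hU)
    (X := {x ∈ X | x t.1 ≤ t.threshold ∧ π x t.1 ≤ t.threshold}) (by grind)
  obtain ⟨r, hr, g, hg, hgle⟩ := ih {v ∈ U | t.threshold < v t.1}
    (Finset.filter_ssubset.2 ⟨u, hu, hut.not_gt⟩)
    ⟨v, Finset.mem_filter.2 ⟨hv, hvt⟩⟩ ((Finset.filter_subset _ _).trans hU)
    (X := {x ∈ X | t.threshold < x t.1 ∧ t.threshold < π x t.1}) (by grind)
  have hassign := hf.node hg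
  refine ⟨.node t.1 t.threshold l r, hl.node hr, _, hassign,
    hΦ.sum_sqDist_le (fun x _ ↦ (hassign x).1) hcut ?_⟩
  rw [sum_filter_not_separates, sum_filter_not_separates]
  refine add_le_add (le_of_eq_of_le ?_ (hfle.trans_eq ?_))
    (le_of_eq_of_le ?_ (hgle.trans_eq ?_)) <;>
    refine Finset.sum_congr rfl fun x hx ↦ ?_ <;>
    obtain ⟨-, hx, hπx⟩ := Finset.mem_filter.1 hx
  · rw [if_pos hx]
  · rw [filter_le_threshold_eq_side hπx]
  · rw [if_neg hx.not_ge]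
  · rw [filter_threshold_lt_eq_side hπx]

end Tree

section Lp

variable {V : Type*} {p R : ℝ} {b : V → ℝ} {U : Finset V} {w : V}

/-- The `ℓ^p` norm of the restriction to `U` of a nonnegative function `b`. -/
noncomputable def lpNorm (p : ℝ) (b : V → ℝ) (U : Finset V) : ℝ := (∑ v ∈ U, b v ^ p) ^ p⁻¹

/-- The quotient of the `ℓ^1` norm and the `ℓ^p` norm on `U` of a nonnegative function `b`; it is
`0` if `b` vanishes on `U`. -/
noncomputable def lpRatio (p : ℝ) (b : V → ℝ) (U : Finset V) : ℝ := (∑ v ∈ U, b v) / lpNorm p b U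

/-- The share of the points of `U` satisfying `r` in the sum of the `p`-th powers of `b`. -/
noncomputable def lpShare (p : ℝ) (b : V → ℝ) (U : Finset V) (r : V → Prop) [DecidablePred r] : ℝ :=
  (∑ v ∈ U with r v, b v ^ p) / ∑ v ∈ U, b v ^ p

lemma sum_rpow_nonneg (hb : ∀ v, 0 ≤ b v) (p : ℝ) (U : Finset V) : 0 ≤ ∑ v ∈ U, b v ^ p :=
  Finset.sum_nonneg fun v _ ↦ Real.rpow_nonneg (hb v) p

lemma lpNorm_nonneg (hb : ∀ v, 0 ≤ b v) (p : ℝ) (U : Finset V) : 0 ≤ lpNorm p b U :=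
  Real.rpow_nonneg (sum_rpow_nonneg hb p U) _

lemma le_lpNorm (hb : ∀ v, 0 ≤ b v) (hp : 0 < p) (hw : w ∈ U) : b w ≤ lpNorm p b U := by
  rw [lpNorm, Real.le_rpow_inv_iff_of_pos (hb w) (sum_rpow_nonneg hb p U) hp]
  exact Finset.single_le_sum (fun v _ ↦ Real.rpow_nonneg (hb v) p) hw

lemma lpNorm_le_two_mul (hb : ∀ v, 0 ≤ b v) (hp : 0 < p) (hR : 0 ≤ R) (hbR : ∀ v ∈ U, b v ≤ R)
    (hcard : (U.card : ℝ) ≤ 2 ^ p) : lpNorm p b U ≤ 2 * R := by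
  rw [lpNorm, Real.rpow_inv_le_iff_of_pos (sum_rpow_nonneg hb p U) (by positivity) hp,
    Real.mul_rpow zero_le_two hR]
  calc ∑ v ∈ U, b v ^ p ≤ ∑ _v ∈ U, R ^ p :=
        Finset.sum_le_sum fun v hv ↦ Real.rpow_le_rpow (hb v) (hbR v hv) hp.le
    _ = U.card * R ^ p := by rw [Finset.sum_const, nsmul_eq_mul]
    _ ≤ 2 ^ p * R ^ p := by gcongr

lemma lpRatio_nonneg (hb : ∀ v, 0 ≤ b v) (p : ℝ) (U : Finset V) : 0 ≤ lpRatio p b U :=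
  div_nonneg (Finset.sum_nonneg fun v _ ↦ hb v) (lpNorm_nonneg hb p U)

lemma sum_le_card_mul_lpNorm (hb : ∀ v, 0 ≤ b v) (hp : 0 < p) {s : Finset V} (hs : s ⊆ U) :
    ∑ v ∈ s, b v ≤ s.card * lpNorm p b U := by
  rw [← nsmul_eq_mul]
  exact Finset.sum_le_card_nsmul _ _ _ fun v hv ↦ le_lpNorm hb hp (hs hv)

lemma sum_eq_zero_of_lpNorm_eq_zero (hb : ∀ v, 0 ≤ b v) (hp : 0 < p) (hU : lpNorm p b U = 0) :
    ∑ v ∈ U, b v = 0 := by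
  have hsum := sum_le_card_mul_lpNorm hb hp (subset_refl U)
  rw [hU, mul_zero] at hsum
  exact hsum.antisymm (Finset.sum_nonneg fun v _ ↦ hb v)

lemma lpRatio_le_card (hb : ∀ v, 0 ≤ b v) (hp : 0 < p) : lpRatio p b U ≤ U.card :=
  div_le_of_le_mul₀ (lpNorm_nonneg hb p U) (Nat.cast_nonneg _)
    (sum_le_card_mul_lpNorm hb hp subset_rfl)

lemma sum_div_two_mul_le_lpRatio (hb : ∀ v, 0 ≤ b v) (hp : 0 < p) (hR : 0 ≤ R)
    (hbR : ∀ v ∈ U, b v ≤ R) (hcard : (U.card : ℝ) ≤ 2 ^ p) :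
    (∑ v ∈ U, b v) / (2 * R) ≤ lpRatio p b U := by
  rcases (lpNorm_nonneg hb p U).eq_or_lt with hzero | hpos
  · rw [lpRatio, sum_eq_zero_of_lpNorm_eq_zero hb hp hzero.symm, zero_div, zero_div]
  · exact div_le_div_of_nonneg_left (Finset.sum_nonneg fun v _ ↦ hb v) hpos
      (lpNorm_le_two_mul hb hp hR hbR hcard)

lemma lpShare_nonneg (hb : ∀ v, 0 ≤ b v) (p : ℝ) (U : Finset V) (r : V → Prop)
    [DecidablePred r] : 0 ≤ lpShare p b U r :=
  div_nonneg (sum_rpow_nonneg hb p _) (sum_rpow_nonneg hb p _)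

lemma lpShare_le_one (hb : ∀ v, 0 ≤ b v) (p : ℝ) (U : Finset V) (r : V → Prop)
    [DecidablePred r] : lpShare p b U r ≤ 1 :=
  div_le_one_of_le₀ (Finset.sum_le_sum_of_subset_of_nonneg (Finset.filter_subset r U)
    fun v _ _ ↦ Real.rpow_nonneg (hb v) p) (sum_rpow_nonneg hb p U)

lemma sum_rpow_filter_not (hb : ∀ v, 0 ≤ b v) (p : ℝ) (U : Finset V) (r : V → Prop)
    [DecidablePred r] :
    ∑ v ∈ U with ¬ r v, b v ^ p = (∑ v ∈ U, b v ^ p) * (1 - lpShare p b U r) := by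
  have hsplit := Finset.sum_filter_add_sum_filter_not U r fun v ↦ b v ^ p
  have hr := sum_rpow_nonneg hb p {v ∈ U | r v}
  have hnr := sum_rpow_nonneg hb p {v ∈ U | ¬ r v}
  rcases eq_or_ne (∑ v ∈ U, b v ^ p) 0 with hzero | hne
  · rw [hzero, zero_mul]
    linarith
  · rw [mul_sub, mul_one, lpShare, mul_div_cancel₀ _ hne]
    linarith

-- Bernoulli's inequality turns a share `x` of the `p`-th powers into a share `x / p` of the norm.
lemma lpNorm_filter_not_mul_le (hb : ∀ v, 0 ≤ b v) (hp : 1 ≤ p) (r : V → Prop) [DecidablePred r] :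
    lpNorm p b {v ∈ U | ¬ r v} * (1 + lpShare p b U r / p) ≤ lpNorm p b U := by
  have hx0 := lpShare_nonneg hb p U r
  have hx1 := lpShare_le_one hb p U r
  set x := lpShare p b U r
  have hbern : (1 - x) ^ p⁻¹ ≤ 1 - x / p := by
    have h := rpow_one_add_le_one_add_mul_self (s := -x) (neg_le_neg hx1) (p := p⁻¹)
      (by positivity) (inv_le_one_of_one_le₀ hp)
    rwa [mul_neg, ← sub_eq_add_neg, ← sub_eq_add_neg, inv_mul_eq_div] at h
  rw [lpNorm, sum_rpow_filter_not hb,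
    Real.mul_rpow (sum_rpow_nonneg hb p U) (sub_nonneg.2 hx1), ← lpNorm, mul_assoc]
  refine mul_le_of_le_one_right (lpNorm_nonneg hb p U) ?_
  calc (1 - x) ^ p⁻¹ * (1 + x / p) ≤ (1 - x / p) * (1 + x / p) := by gcongr
    _ ≤ 1 := by nlinarith [sq_nonneg (x / p)]

lemma lpRatio_mul_le (hb : ∀ v, 0 ≤ b v) (hp : 1 ≤ p) (r : V → Prop) [DecidablePred r] :
    lpRatio p b U * (1 + lpShare p b U r / p) ≤
      lpRatio p b {v ∈ U | ¬ r v} + 2 * ({v ∈ U | r v}.card : ℕ) := by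
  have hp0 : 0 < p := zero_lt_one.trans_le hp
  have hy0 : 0 ≤ lpShare p b U r / p := div_nonneg (lpShare_nonneg hb p U r) hp0.le
  have hy1 : lpShare p b U r / p ≤ 1 :=
    div_le_one_of_le₀ ((lpShare_le_one hb p U r).trans hp) hp0.le
  have hnorm := lpNorm_filter_not_mul_le (U := U) hb hp r
  set y := lpShare p b U r / p
  have hremoved : (∑ v ∈ U with r v, b v) / lpNorm p b U ≤ ({v ∈ U | r v}.card : ℕ) :=
    div_le_of_le_mul₀ (lpNorm_nonneg hb p U) (Nat.cast_nonneg _)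
      (sum_le_card_mul_lpNorm hb hp0 (Finset.filter_subset _ _))
  have hkept : (∑ v ∈ U with ¬ r v, b v) / lpNorm p b U * (1 + y) ≤
      lpRatio p b {v ∈ U | ¬ r v} := by
    rcases (lpNorm_nonneg hb p {v ∈ U | ¬ r v}).eq_or_lt with hzero | hpos
    · rw [lpRatio, sum_eq_zero_of_lpNorm_eq_zero hb hp0 hzero.symm, zero_div, zero_div, zero_mul]
    · have hpos' : 0 < lpNorm p b U := lt_of_lt_of_le (by positivity) hnorm
      rw [lpRatio, div_mul_eq_mul_div, div_le_div_iff₀ hpos' hpos, mul_assoc]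
      exact mul_le_mul_of_nonneg_left (by linarith) (Finset.sum_nonneg fun v _ ↦ hb v)
  calc lpRatio p b U * (1 + y)
      = (∑ v ∈ U with ¬ r v, b v) / lpNorm p b U * (1 + y) +
          (∑ v ∈ U with r v, b v) / lpNorm p b U * (1 + y) := by
        rw [lpRatio, ← Finset.sum_filter_not_add_sum_filter U r]
        ring
    _ ≤ lpRatio p b {v ∈ U | ¬ r v} + ({v ∈ U | r v}.card : ℕ) * 2 := by
        gcongr
        linarith
    _ = _ := by rw [mul_comm 2]

lemma sum_rpow_le_two_mul_sum_filter (hb : ∀ v, 0 ≤ b v) (hp : 0 < p) (hw : w ∈ U)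
    (hcard : 2 * (U.card : ℝ) ≤ 2 ^ p) :
    ∑ v ∈ U, b v ^ p ≤ 2 * ∑ v ∈ U with b w ≤ 2 * b v, b v ^ p := by
  have hlight : ∑ v ∈ U with ¬ b w ≤ 2 * b v, b v ^ p ≤ (∑ v ∈ U, b v ^ p) / 2 := by
    calc ∑ v ∈ U with ¬ b w ≤ 2 * b v, b v ^ p
        ≤ ∑ v ∈ U with ¬ b w ≤ 2 * b v, (b w / 2) ^ p := by
          refine Finset.sum_le_sum fun v hv ↦ Real.rpow_le_rpow (hb v) ?_ hp.le
          linarith [(Finset.mem_filter.1 hv).2]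
      _ ≤ ∑ _v ∈ U, (b w / 2) ^ p :=
          Finset.sum_le_sum_of_subset_of_nonneg (Finset.filter_subset _ _)
            fun v _ _ ↦ Real.rpow_nonneg (div_nonneg (hb w) zero_le_two) p
      _ = U.card / 2 ^ p * b w ^ p := by
          rw [Finset.sum_const, nsmul_eq_mul, Real.div_rpow (hb w) zero_le_two]
          ring
      _ ≤ 1 / 2 * b w ^ p := by
          refine mul_le_mul_of_nonneg_right ?_ (Real.rpow_nonneg (hb w) p)
          rw [div_le_div_iff₀ (by positivity) two_pos]
          linarith
      _ ≤ (∑ v ∈ U, b v ^ p) / 2 := by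
          have := Finset.single_le_sum (fun v _ ↦ Real.rpow_nonneg (hb v) p) hw
          linarith
  have hsplit := Finset.sum_filter_add_sum_filter_not U (fun v ↦ b w ≤ 2 * b v) fun v ↦ b v ^ p
  linarith

end Lp

section LpPotential

variable {ι : Type*} [Fintype ι] {U 𝒰 : Finset (ι → ℝ)} {c : ι → ℝ} {p : ℝ}

/-- The cut potential: the number of centers, weighted by `log (1 + p²)`, and the defect of the
`ℓ^p` ratio of the squared distances from `c`. A random cut lowers the first term by much if the
spread `∑ v ∈ U, cutMass U v c` is large compared to the radius, and the second term otherwise.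
The summand `2 * U.card` makes up for what the removed centers contributed to the ratio. -/
noncomputable def lpPotential (p : ℝ) (U : Finset (ι → ℝ)) (c : ι → ℝ) : ℝ :=
  256 * Real.log (1 + p ^ 2) * U.card + 16384 * (2 * U.card - lpRatio p (sqDist · c) U)

lemma log_one_add_sq_nonneg (p : ℝ) : 0 ≤ Real.log (1 + p ^ 2) :=
  Real.log_nonneg (le_add_of_nonneg_right (sq_nonneg p))

lemma log_one_add_sq_le (hp : 0 ≤ p) : Real.log (1 + p ^ 2) ≤ p := by
  rw [Real.log_le_iff_le_exp (by positivity)]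
  have h := Real.sum_le_exp_of_nonneg hp 4
  norm_num [Finset.sum_range_succ, Nat.factorial] at h
  nlinarith [mul_nonneg hp (sq_nonneg (p - 3 / 2))]

lemma lpPotential_nonneg (hp : 0 < p) (U : Finset (ι → ℝ)) (c : ι → ℝ) :
    0 ≤ lpPotential p U c := by
  have hratio := lpRatio_le_card (U := U) (fun v ↦ sqDist_nonneg v c) hp
  have hlog := log_one_add_sq_nonneg p
  rw [lpPotential]
  have : (0 : ℝ) ≤ U.card := Nat.cast_nonneg _
  have : 0 ≤ 2 * (U.card : ℝ) - lpRatio p (sqDist · c) U := by linarith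
  positivity

lemma lpPotential_le (p : ℝ) (U : Finset (ι → ℝ)) (c : ι → ℝ) :
    lpPotential p U c ≤ U.card * (256 * Real.log (1 + p ^ 2) + 32768) := by
  have hratio := lpRatio_nonneg (fun v ↦ sqDist_nonneg v c) p U
  rw [lpPotential]
  linarith

lemma le_lpPotential_sub_side (hp : 1 ≤ p) (U : Finset (ι → ℝ)) (c : ι → ℝ) (t : GapCut ι) :
    256 * Real.log (1 + p ^ 2) * ({v ∈ U | t.Separates v c}.card : ℕ) +
        16384 * (lpRatio p (sqDist · c) U * (lpShare p (sqDist · c) U (t.Separates · c) / p)) ≤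
      lpPotential p U c - lpPotential p (side U c t) c := by
  have hratio := lpRatio_mul_le (U := U) (fun v ↦ sqDist_nonneg v c) hp (t.Separates · c)
  have hcard : (({v ∈ U | t.Separates v c}.card : ℕ) : ℝ) + (side U c t).card = U.card := by
    rw [side]
    exact_mod_cast Finset.card_filter_add_card_filter_not (s := U) (t.Separates · c)
  rw [lpPotential, lpPotential, ← hcard]
  rw [← side] at hratio
  linarith

lemma le_sum_weight_mul_lpPotential_sub (hp : 1 ≤ p) (U : Finset (ι → ℝ)) (c : ι → ℝ) :
    256 * Real.log (1 + p ^ 2) * (∑ v ∈ U, cutMass U v c) +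
        16384 * (lpRatio p (sqDist · c) U *
          ((∑ v ∈ U, sqDist v c ^ p * cutMass U v c) / (∑ v ∈ U, sqDist v c ^ p) / p)) ≤
      ∑ t ∈ cuts U, t.weight * (lpPotential p U c - lpPotential p (side U c t) c) := by
  have hcard := sum_weight_mul_sum_separates U U (fun _ ↦ c) fun _ ↦ 1
  have hshare := sum_weight_mul_sum_separates U U (fun _ ↦ c) fun v ↦ sqDist v c ^ p
  simp only [one_mul, Finset.sum_const, nsmul_eq_mul, mul_one] at hcard
  refine le_of_eq_of_le ?_ (Finset.sum_le_sum fun t ht ↦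
    mul_le_mul_of_nonneg_left (le_lpPotential_sub_side hp U c t) (weight_pos ht).le)
  simp only [← hcard, ← hshare, mul_add, Finset.sum_add_distrib, lpShare]
  congr 1
  · rw [Finset.mul_sum]
    exact Finset.sum_congr rfl fun t _ ↦ by ring
  · rw [Finset.sum_div, Finset.sum_div, Finset.mul_sum, Finset.mul_sum]
    exact Finset.sum_congr rfl fun t _ ↦ by ring

-- The centers at least half as far from `c` as the farthest one carry half of the `p`-th powers,
-- and each of them is separated from `c` by a large mass of cuts.
lemma le_sum_rpow_mul_cutMass_div (hp : 0 < p) (hc : c ∈ U) (hcard : 2 * (U.card : ℝ) ≤ 2 ^ p)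
    (hR : 32 * Real.log (1 + p ^ 2) * ∑ v ∈ U, cutMass U v c < radius U c) :
    p ^ 2 * radius U c ^ 2 ≤
      1024 * Real.log (1 + p ^ 2) * (∑ v ∈ U, sqDist v c) *
        ((∑ v ∈ U, sqDist v c ^ p * cutMass U v c) / ∑ v ∈ U, sqDist v c ^ p) := by
  have hlog := log_one_add_sq_nonneg p
  set Λ := Real.log (1 + p ^ 2)
  set R := radius U c
  set B := ∑ v ∈ U, sqDist v c
  set Q := ∑ v ∈ U, sqDist v c ^ p
  have hS : 0 ≤ ∑ v ∈ U, cutMass U v c := Finset.sum_nonneg fun v _ ↦ cutMass_nonneg U v c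
  have hRpos : 0 < R := lt_of_le_of_lt (by positivity) hR
  obtain ⟨w, hw, hwR⟩ := exists_sqDist_eq_radius ⟨c, hc⟩ c
  have hfar : ∀ v ∈ U, R ≤ 2 * sqDist v c → p ^ 2 * R ^ 2 ≤ 512 * Λ * B * cutMass U v c := by
    intro v hv hvR
    have h := mul_sq_sqDist_le (pow_pos hp 2) hc hv (by linarith) (by linarith)
    have := pow_le_pow_left₀ hRpos.le hvR 2
    nlinarith [sq_nonneg p]
  have hhalf : Q ≤ 2 * ∑ v ∈ U with R ≤ 2 * sqDist v c, sqDist v c ^ p := by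
    have h := sum_rpow_le_two_mul_sum_filter (b := (sqDist · c)) (fun v ↦ sqDist_nonneg v c) hp hw
      hcard
    rwa [hwR] at h
  have hQ : 0 < Q := Finset.sum_pos' (fun v _ ↦ Real.rpow_nonneg (sqDist_nonneg v c) p)
    ⟨w, hw, Real.rpow_pos_of_pos (hwR ▸ hRpos) p⟩
  have hfarsum : p ^ 2 * R ^ 2 * ∑ v ∈ U with R ≤ 2 * sqDist v c, sqDist v c ^ p ≤
      512 * Λ * B * ∑ v ∈ U, sqDist v c ^ p * cutMass U v c := by
    rw [Finset.mul_sum, Finset.mul_sum]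
    refine (Finset.sum_le_sum fun v hv ↦ ?_).trans (Finset.sum_le_sum_of_subset_of_nonneg
      (Finset.filter_subset (R ≤ 2 * sqDist · c) U) fun v _ _ ↦ ?_)
    · obtain ⟨hv, hvR⟩ := Finset.mem_filter.1 hv
      have := mul_le_mul_of_nonneg_right (hfar v hv hvR) (Real.rpow_nonneg (sqDist_nonneg v c) p)
      linarith
    · have : 0 ≤ B := Finset.sum_nonneg fun v _ ↦ sqDist_nonneg v c
      have := cutMass_nonneg U v c
      have := Real.rpow_nonneg (sqDist_nonneg v c) p
      positivity
  rw [← mul_div_assoc, le_div_iff₀ hQ]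
  nlinarith [sq_nonneg (p * R)]

lemma eight_mul_radius_le (hp : 1 ≤ p) (hc : c ∈ U) (hcard : 2 * (U.card : ℝ) ≤ 2 ^ p) :
    8 * radius U c ≤ 256 * Real.log (1 + p ^ 2) * (∑ v ∈ U, cutMass U v c) +
      16384 * (lpRatio p (sqDist · c) U *
        ((∑ v ∈ U, sqDist v c ^ p * cutMass U v c) / (∑ v ∈ U, sqDist v c ^ p) / p)) := by
  have hp0 : 0 < p := zero_lt_one.trans_le hp
  have hlog := log_one_add_sq_nonneg p
  have hS : 0 ≤ ∑ v ∈ U, cutMass U v c := Finset.sum_nonneg fun v _ ↦ cutMass_nonneg U v c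
  have hratio := lpRatio_nonneg (fun v ↦ sqDist_nonneg v c) p U
  have hm : 0 ≤ (∑ v ∈ U, sqDist v c ^ p * cutMass U v c) / ∑ v ∈ U, sqDist v c ^ p :=
    div_nonneg (Finset.sum_nonneg fun v _ ↦ mul_nonneg
      (Real.rpow_nonneg (sqDist_nonneg v c) p) (cutMass_nonneg U v c))
      (sum_rpow_nonneg (fun v ↦ sqDist_nonneg v c) p U)
  rcases le_or_gt (radius U c) (32 * Real.log (1 + p ^ 2) * ∑ v ∈ U, cutMass U v c) with hR | hR
  · have := mul_nonneg hratio (div_nonneg hm hp0.le)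
    linarith
  · have hmass := le_sum_rpow_mul_cutMass_div hp0 hc hcard hR
    set m := (∑ v ∈ U, sqDist v c ^ p * cutMass U v c) / ∑ v ∈ U, sqDist v c ^ p
    have hRpos : 0 < radius U c := lt_of_le_of_lt (by positivity) hR
    have hB : 0 ≤ ∑ v ∈ U, sqDist v c := Finset.sum_nonneg fun v _ ↦ sqDist_nonneg v c
    have hratio' := sum_div_two_mul_le_lpRatio (fun v ↦ sqDist_nonneg v c) hp0 hRpos.le
      (fun v hv ↦ sqDist_le_radius hv) (by linarith)
    have hmass' : p * radius U c ^ 2 ≤ 1024 * ((∑ v ∈ U, sqDist v c) * m) := by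
      have hlog := mul_le_mul_of_nonneg_right (log_one_add_sq_le hp0.le) (mul_nonneg hB hm)
      exact le_of_mul_le_mul_left (by linarith) hp0
    calc 8 * radius U c
        ≤ 16384 * ((∑ v ∈ U, sqDist v c) / (2 * radius U c) * (m / p)) := by
          rw [div_mul_div_comm, ← mul_div_assoc, le_div_iff₀ (by positivity)]
          linarith
      _ ≤ 16384 * (lpRatio p (sqDist · c) U * (m / p)) := by gcongr
      _ ≤ _ := le_add_of_nonneg_left (by positivity)

lemma isCutPotential_lpPotential (hp : 1 ≤ p) (hcard : 2 * (𝒰.card : ℝ) ≤ 2 ^ p) :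
    IsCutPotential 𝒰 (lpPotential p) where
  nonneg := lpPotential_nonneg (zero_lt_one.trans_le hp)
  radius_le_sum_drop U hU c hc := by
    have hUcard : (U.card : ℝ) ≤ 𝒰.card := Nat.cast_le.2 (Finset.card_le_card hU)
    exact (eight_mul_radius_le hp hc (by linarith)).trans (le_sum_weight_mul_lpPotential_sub hp U c)

end LpPotential

section Asymptotics

lemma one_lt_log_of_three_le {k : ℝ} (hk : 3 ≤ k) : 1 < Real.log k :=
  (Real.lt_log_iff_exp_lt (by linarith)).2 (Real.exp_one_lt_three.trans_le hk)

lemma exists_one_add_log_one_add_sq_logb_le :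
    ∃ C : ℝ, 0 < C ∧ ∀ k : ℝ, 3 ≤ k →
      1 + Real.log (1 + Real.logb 2 (2 * k) ^ 2) ≤ C * Real.log (Real.log k) := by
  set a : ℝ := 1 + 1 / Real.log 2
  have ha : 0 < 1 + a ^ 2 := by positivity
  have hloga : 0 ≤ Real.log (1 + a ^ 2) := Real.log_nonneg (le_add_of_nonneg_right (sq_nonneg a))
  have hlog3 : 0 < Real.log (Real.log 3) := Real.log_pos (one_lt_log_of_three_le le_rfl)
  refine ⟨(1 + Real.log (1 + a ^ 2)) / Real.log (Real.log 3) + 2, by positivity, fun k hk ↦ ?_⟩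
  have hlogk : 1 < Real.log k := one_lt_log_of_three_le hk
  have hloglog : Real.log (Real.log 3) ≤ Real.log (Real.log k) :=
    Real.log_le_log (by linarith [one_lt_log_of_three_le le_rfl])
      (Real.log_le_log three_pos hk)
  have hlogb : Real.logb 2 (2 * k) ≤ a * Real.log k := by
    have h2 := Real.log_pos one_lt_two
    rw [Real.logb, Real.log_mul two_ne_zero (by linarith), add_div, div_self h2.ne', add_mul,
      one_div_mul_eq_div, one_mul]
    gcongr
  have hlogb0 : 0 ≤ Real.logb 2 (2 * k) := Real.logb_nonneg one_lt_two (by linarith)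
  calc 1 + Real.log (1 + Real.logb 2 (2 * k) ^ 2)
      ≤ 1 + Real.log ((1 + a ^ 2) * Real.log k ^ 2) := by
        have hsq := pow_le_pow_left₀ hlogb0 hlogb 2
        have hone := one_le_pow₀ (n := 2) hlogk.le
        gcongr
        linarith
    _ = (1 + Real.log (1 + a ^ 2)) + 2 * Real.log (Real.log k) := by
        rw [Real.log_mul ha.ne' (by positivity), Real.log_pow]
        push_cast
        ring
    _ ≤ (1 + Real.log (1 + a ^ 2)) * (Real.log (Real.log k) / Real.log (Real.log 3)) +
          2 * Real.log (Real.log k) := by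
        gcongr
        exact le_mul_of_one_le_right (by positivity) ((one_le_div hlog3).2 hloglog)
    _ = _ := by ring

end Asymptotics

/-- the price of explainability for `k`-means is `O(k ln ln k)`:
there is a universal constant `C > 0` such that for every reference clustering
there is a threshold tree `T` separating the centers whose induced assignment
`π_T` has `cost₂(T) ≤ C · k · ln(ln k) · cost₂(π, 𝒰)`. -/
theorem stmt2 :
    ∃ C : ℝ, 0 < C ∧
      ∀ (d k : ℕ), 1 ≤ d → 3 ≤ k →
        ∀ (𝒳 𝒰 : Finset (Fin d → ℝ)), 𝒰.card = k →
          ∀ π : (Fin d → ℝ) → (Fin d → ℝ), (∀ x ∈ 𝒳, π x ∈ 𝒰) →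
            ∃ T : ThresholdTree d, T.Separates 𝒰 ∧
              ∃ πT : (Fin d → ℝ) → (Fin d → ℝ),
                (∀ x ∈ 𝒳, πT x ∈ 𝒰) ∧
                (∀ x ∈ 𝒳, ∀ B ∈ T.leaves, x ∈ B → πT x ∈ B) ∧
                cost2 𝒳 πT ≤
                  C * (k : ℝ) * Real.log (Real.log (k : ℝ)) * cost2 𝒳 π := by
  obtain ⟨C, hC, hlog⟩ := exists_one_add_log_one_add_sq_logb_le
  refine ⟨32770 * C, by positivity, fun d k _ hk 𝒳 𝒰 hcard π hπ ↦ ?_⟩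
  have hk3 : (3 : ℝ) ≤ k := mod_cast hk
  set p := Real.logb 2 (2 * k)
  have hp : 1 ≤ p := (Real.le_logb_iff_rpow_le one_lt_two (by linarith)).2 (by norm_num; linarith)
  have hpk : (2 : ℝ) ^ p = 2 * 𝒰.card := by
    rw [hcard, Real.rpow_logb two_pos (by norm_num) (by linarith)]
  obtain ⟨T, hT, f, hf, hcost⟩ := (isCutPotential_lpPotential hp hpk.ge).exists_tree
    (Finset.card_pos.1 (by omega)) subset_rfl hπ
  refine ⟨T, hT, f, fun x _ ↦ (hf x).1, fun x _ ↦ (hf x).2, hcost.trans ?_⟩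
  rw [cost2, Finset.mul_sum]
  refine Finset.sum_le_sum fun x _ ↦ mul_le_mul_of_nonneg_right ?_ (sqDist_nonneg x (π x))
  calc 2 + lpPotential p 𝒰 (π x)
      ≤ 2 + k * (256 * Real.log (1 + p ^ 2) + 32768) := by
        rw [← hcard]
        gcongr
        exact lpPotential_le p 𝒰 (π x)
    _ ≤ 32770 * k * (1 + Real.log (1 + p ^ 2)) := by
        have := mul_nonneg (Nat.cast_nonneg k) (log_one_add_sq_nonneg p)
        linarith
    _ ≤ 32770 * k * (C * Real.log (Real.log k)) := by
        gcongr
        exact hlog k hk3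
    _ = _ := by ring
end

section
/- There exist a constant C > 0 and k₀ ∈ ℕ such that for every k ≥ k₀ there exist s ∈ ℕ with 3 ≤ s ≤ k and subsets S₁,…,S_k of {1,…,k}, each of size exactly s, such that every hitting set H of the family (i.e., every H ⊆ {1,…,k} with H ∩ S_i ≠ ∅ for all i ∈ {1,…,k}) satisfies |H| · (s − 2) ≥ k · (ln k − C · ln ln k). -/
/-!
Choose the `k` sets independently and uniformly among the `s`-subsets of a `k`-set. A fixed set of
`h` points misses a random `s`-set with probability
`(k - h).choose s / k.choose s ≥ exp (-h s / (k - h + 1 - s))`. If the exponent is at least `-E`,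
those `h` points therefore hit all `k` sets with probability at most `exp (-k exp (-E))`, and the
union bound over at most `k ^ h = exp (h log k)` sets of `h` points succeeds as soon as
`h log k < k exp (-E)`.

With `L = log k`, `B = L - 4 log L`, `s - 2 = ⌈k / L⌉` and `h = ⌊k B / (s - 2)⌋ ≤ L ^ 2`, the value
`E = B + 2` is admissible; then `k exp (-E) = L ^ 4 exp (-2)`, which exceeds `h L` once `L > e ^ 2`.
-/

open Finset Real

/-- `H` is a hitting set (transversal) of the family `S`, i.e. it meets every member. The family is
indexed, so that its members need not be distinct. -/
def IsHittingSet {ι α : Type*} [DecidableEq α] (S : ι → Finset α) (H : Finset α) : Prop :=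
  ∀ i, (H ∩ S i).Nonempty

section Counting

variable {ι α : Type*} [DecidableEq α]

lemma IsHittingSet.mono {S : ι → Finset α} {H K : Finset α} (hH : IsHittingSet S H) (hHK : H ⊆ K) :
    IsHittingSet S K :=
  fun i ↦ (hH i).mono (inter_subset_inter_right hHK)

variable [Fintype α]

lemma card_powersetCard_filter_inter_nonempty (s : ℕ) (H : Finset α) :
    #{A ∈ powersetCard s univ | (H ∩ A).Nonempty} =
      (Fintype.card α).choose s - (Fintype.card α - #H).choose s := by
  have hcompl : ({A ∈ powersetCard s univ | (H ∩ A).Nonempty} : Finset (Finset α)) =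
      powersetCard s univ \ powersetCard s Hᶜ := by
    ext A
    simp only [mem_filter, mem_sdiff, mem_powersetCard, subset_compl_iff_disjoint_left,
      ← not_disjoint_iff_nonempty_inter]
    tauto
  rw [hcompl, card_sdiff_of_subset (powersetCard_mono (subset_univ _))]
  simp only [card_powersetCard, card_univ, card_compl]

theorem exists_uniform_forall_isHittingSet_lt_card [Fintype ι] {s h : ℕ} (hh : h ≤ Fintype.card α)
    (hlt : (Fintype.card α).choose h *
        ((Fintype.card α).choose s - (Fintype.card α - h).choose s) ^ Fintype.card ι <
      (Fintype.card α).choose s ^ Fintype.card ι) :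
    ∃ S : ι → Finset α, (∀ i, #(S i) = s) ∧ ∀ H, IsHittingSet S H → h < #H := by
  classical
  let hitBy (H : Finset α) : Finset (ι → Finset α) :=
    Fintype.piFinset fun _ ↦ {A ∈ powersetCard s univ | (H ∩ A).Nonempty}
  have card_hitBy : ∀ H ∈ powersetCard h univ, #(hitBy H) ≤
      ((Fintype.card α).choose s - (Fintype.card α - h).choose s) ^ Fintype.card ι := by
    intro H hH
    rw [Fintype.card_piFinset, prod_const, card_powersetCard_filter_inter_nonempty,
      (mem_powersetCard.1 hH).2, card_univ]
  obtain ⟨S, hS, hS_unhit⟩ : ∃ S ∈ Fintype.piFinset fun _ : ι ↦ powersetCard s (univ : Finset α),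
      S ∉ (powersetCard h univ).biUnion hitBy := by
    refine exists_mem_notMem_of_card_lt_card <|
      (card_biUnion_le_card_mul _ _ _ card_hitBy).trans_lt ?_
    simpa only [Fintype.card_piFinset, prod_const, card_powersetCard, card_univ] using hlt
  rw [Fintype.mem_piFinset] at hS
  refine ⟨S, fun i ↦ (mem_powersetCard.1 (hS i)).2, fun H hH ↦ ?_⟩
  by_contra! hcard
  obtain ⟨K, hHK, hK⟩ := exists_superset_card_eq hcard hh
  refine hS_unhit (mem_biUnion.2 ⟨K, mem_powersetCard.2 ⟨subset_univ K, hK⟩, ?_⟩)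
  exact Fintype.mem_piFinset.2 fun i ↦ mem_filter.2 ⟨hS i, hH.mono hHK i⟩

end Counting

lemma choose_le_exp_mul_log (n h : ℕ) : (n.choose h : ℝ) ≤ exp (h * log n) := by
  rcases n.eq_zero_or_pos with rfl | hn
  · simpa using Nat.choose_le_pow 0 h |>.trans (pow_le_one₀ le_rfl zero_le_one)
  · rw [exp_nat_mul, exp_log (by exact_mod_cast hn)]
    exact_mod_cast Nat.choose_le_pow n h

lemma choose_succ_le_exp_mul_choose {n s : ℕ} (hs : s ≤ n) :
    ((n + 1).choose s : ℝ) ≤ exp (s / (n + 1 - s)) * n.choose s := by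
  have hpos : (0 : ℝ) < n + 1 - s := by
    have : (s : ℝ) ≤ n := by exact_mod_cast hs
    linarith
  have hratio : ((n + 1).choose s : ℝ) * (n + 1 - s) = n.choose s * (n + 1) := by
    have h := Nat.choose_mul_succ_eq n s
    rw [← @Nat.cast_inj ℝ] at h
    push_cast [Nat.cast_sub (hs.trans n.le_succ)] at h
    exact h.symm
  calc ((n + 1).choose s : ℝ) = (s / (n + 1 - s) + 1) * n.choose s := by
        field_simp
        linarith
    _ ≤ exp (s / (n + 1 - s)) * n.choose s := by
        gcongr
        exact add_one_le_exp _

lemma choose_add_le_exp_mul_choose {n s : ℕ} (hs : s ≤ n) (h : ℕ) :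
    ((n + h).choose s : ℝ) ≤ exp (h * (s / (n + 1 - s))) * n.choose s := by
  have hsn : (s : ℝ) ≤ n := by exact_mod_cast hs
  induction h with
  | zero => simp
  | succ h ih =>
    calc ((n + h + 1).choose s : ℝ)
        ≤ exp (s / ((n + h : ℕ) + 1 - s)) * (n + h).choose s :=
          choose_succ_le_exp_mul_choose (hs.trans (Nat.le_add_right n h))
      _ ≤ exp (s / (n + 1 - s)) * (exp (h * (s / (n + 1 - s))) * n.choose s) := by
          gcongr
          · linarith
          · exact n.le_add_right h
      _ = exp ((h + 1 : ℕ) * (s / (n + 1 - s))) * n.choose s := by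
          rw [← mul_assoc, ← exp_add]
          push_cast
          ring_nf

lemma exp_neg_mul_choose_le_choose_sub {n s h : ℕ} (hsh : s + h ≤ n) :
    exp (-(h * (s / (n - h + 1 - s)))) * n.choose s ≤ ((n - h).choose s : ℝ) := by
  have hchoose := choose_add_le_exp_mul_choose (Nat.le_sub_of_add_le hsh) h
  have hhn : h ≤ n := le_of_add_le_right hsh
  rw [Nat.sub_add_cancel hhn, Nat.cast_sub hhn] at hchoose
  rwa [exp_neg, inv_mul_le_iff₀ (exp_pos _)]

lemma sub_pow_le_pow_mul_exp_neg {x y p : ℝ} (hx : 0 ≤ x) (hyx : y ≤ x) (hpy : p * x ≤ y) (m : ℕ) :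
    (x - y) ^ m ≤ x ^ m * exp (-(m * p)) := by
  have hsub : x - y ≤ x * exp (-p) := by
    linarith [mul_le_mul_of_nonneg_left (add_one_le_exp (-p)) hx]
  calc (x - y) ^ m ≤ (x * exp (-p)) ^ m := pow_le_pow_left₀ (sub_nonneg.2 hyx) hsub m
    _ = x ^ m * exp (-(m * p)) := by rw [mul_pow, ← exp_nat_mul, mul_neg]

lemma choose_mul_choose_sub_choose_pow_lt {n m s h : ℕ} {E : ℝ} (hsh : s + h ≤ n)
    (hE : h * (s / (n - h + 1 - s)) ≤ E) (hlt : h * log n < m * exp (-E)) :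
    n.choose h * (n.choose s - (n - h).choose s) ^ m < n.choose s ^ m := by
  have hle : (n - h).choose s ≤ n.choose s := Nat.choose_le_choose s (n.sub_le h)
  have hpos : (0 : ℝ) < n.choose s := by exact_mod_cast Nat.choose_pos (le_of_add_le_left hsh)
  have hmiss : exp (-E) * n.choose s ≤ ((n - h).choose s : ℝ) :=
    le_trans (by gcongr) (exp_neg_mul_choose_le_choose_sub hsh)
  rw [← @Nat.cast_lt ℝ]
  push_cast [Nat.cast_sub hle]
  calc (n.choose h : ℝ) * (n.choose s - (n - h).choose s) ^ m
      ≤ exp (h * log n) * (n.choose s ^ m * exp (-(m * exp (-E)))) := by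
        gcongr
        · exact pow_nonneg (sub_nonneg.2 (by exact_mod_cast hle)) m
        · exact choose_le_exp_mul_log n h
        · exact sub_pow_le_pow_mul_exp_neg hpos.le (by exact_mod_cast hle) hmiss m
    _ = n.choose s ^ m * exp (h * log n - m * exp (-E)) := by
        rw [sub_eq_add_neg, exp_add]
        ring
    _ < n.choose s ^ m :=
        mul_lt_of_lt_one_right (pow_pos hpos m) (exp_lt_one_iff.2 (sub_neg.2 hlt))

lemma pow_four_le_exp {x : ℝ} (hx : 120 ≤ x) : x ^ 4 ≤ exp x :=
  calc x ^ 4 ≤ x ^ 5 / (5 : ℕ).factorial := by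
        rw [le_div_iff₀ (by positivity), pow_succ x 4]
        gcongr
        simpa [Nat.factorial] using hx
    _ ≤ exp x := pow_div_factorial_le_exp x (by linarith) 5

lemma four_mul_log_le {x : ℝ} (hx : 120 ≤ x) : 4 * log x ≤ x :=
  calc 4 * log x = log (x ^ 4) := by rw [log_pow, Nat.cast_ofNat]
    _ ≤ x := (log_le_iff_le_exp (pow_pos (by linarith) 4)).2 (pow_four_le_exp hx)

lemma pow_three_lt_exp_mul_exp_neg {x : ℝ} (hx : 9 ≤ x) :
    x ^ 3 < exp x * exp (-(x - 4 * log x + 2)) := by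
  have hx0 : 0 < x := by linarith
  have hlog : 2 < log x := by
    rw [lt_log_iff_exp_lt hx0]
    calc exp 2 = exp 1 ^ 2 := by rw [← exp_nat_mul]; norm_num
      _ < 3 ^ 2 := by gcongr; exact exp_one_lt_three
      _ ≤ x := by linarith
  calc x ^ 3 = exp ((3 : ℕ) * log x) := by rw [exp_nat_mul, exp_log hx0]
    _ < exp (x + -(x - 4 * log x + 2)) := exp_lt_exp.2 (by push_cast; linarith)
    _ = exp x * exp (-(x - 4 * log x + 2)) := exp_add _ _

lemma add_le_mul_of_le_add_three {L t s h : ℝ} (hL : 5 ≤ L) (ht : L ^ 3 ≤ t) (hs : s ≤ t + 3)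
    (hh : h ≤ L ^ 2) : s + h ≤ L * t := by
  have ht0 : 0 ≤ t := (by positivity : 0 ≤ L ^ 3).trans ht
  have hLt : 5 * t ≤ L * t := by gcongr
  have hL3 : L ^ 2 + 3 ≤ 4 * L ^ 3 := by nlinarith
  linarith

lemma mul_div_le_add_two {L t s h B : ℝ} (hL : 5 ≤ L) (ht : L ^ 3 ≤ t) (hB : 0 ≤ B) (hBL : B ≤ L)
    (hs : s ≤ t + 3) (hh : h ≤ L ^ 2) (hhs : h * (s - 2) ≤ L * t * B) :
    h * (s / (L * t - h + 1 - s)) ≤ B + 2 := by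
  have hden : 0 < L * t - h + 1 - s := by linarith [add_le_mul_of_le_add_three hL ht hs hh]
  have ht0 : 0 ≤ t := (by positivity : 0 ≤ L ^ 3).trans ht
  have herror : (B + 2) * (h + s - 1) + 2 * h ≤ 2 * (L * t) :=
    calc (B + 2) * (h + s - 1) + 2 * h
        ≤ (L + 2) * (L ^ 2 + t + 2) + 2 * L ^ 2 := by
          have hsum : h + s - 1 ≤ L ^ 2 + t + 2 := by linarith
          gcongr ?_ + 2 * ?_
          exact (mul_le_mul_of_nonneg_left hsum (by linarith)).trans (by gcongr)
      _ ≤ 2 * (L * t) := by nlinarith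
  rw [← mul_div_assoc, div_le_iff₀ hden]
  linarith

lemma exists_nat_parameters {k : ℕ} {L B : ℝ} (hL : 5 ≤ L) (hk : L ^ 4 ≤ k) (hB : 0 ≤ B)
    (hBL : B ≤ L) :
    ∃ s h : ℕ, 3 ≤ s ∧ s + h ≤ k ∧ (h : ℝ) ≤ L ^ 2 ∧ h * (s / ((k : ℝ) - h + 1 - s)) ≤ B + 2 ∧
      k * B < (h + 1) * ((s : ℝ) - 2) := by
  have hL0 : 0 < L := by linarith
  obtain ⟨t, hkt⟩ : ∃ t, (k : ℝ) = L * t := ⟨k / L, by field_simp⟩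
  have ht : L ^ 3 ≤ t := le_of_mul_le_mul_left (by linarith) hL0
  have ht0 : 0 < t := (by positivity : 0 < L ^ 3).trans_le ht
  set h := ⌊L * t * B / ⌈t⌉₊⌋₊
  have hceil : t ≤ ⌈t⌉₊ := Nat.le_ceil t
  have hceil0 : (0 : ℝ) < ⌈t⌉₊ := ht0.trans_le hceil
  have hcast : ((⌈t⌉₊ + 2 : ℕ) : ℝ) - 2 = ⌈t⌉₊ := by push_cast; ring
  have hs : ((⌈t⌉₊ + 2 : ℕ) : ℝ) ≤ t + 3 := by linarith [Nat.ceil_lt_add_one ht0.le]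
  have hfloor : (h : ℝ) ≤ L * t * B / ⌈t⌉₊ := Nat.floor_le (by positivity)
  have hh : (h : ℝ) ≤ L ^ 2 :=
    calc (h : ℝ) ≤ L * t * L / t := hfloor.trans (by gcongr)
      _ = L ^ 2 := by field_simp
  have hsh : ((⌈t⌉₊ + 2 : ℕ) : ℝ) + h ≤ k := hkt ▸ add_le_mul_of_le_add_three hL ht hs hh
  simp only [hkt]
  refine ⟨⌈t⌉₊ + 2, h, ?_, by exact_mod_cast hsh, hh, ?_, ?_⟩
  · exact Nat.add_le_add_right (Nat.ceil_pos.2 ht0) 2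
  · refine mul_div_le_add_two hL ht hB hBL hs hh ?_
    rwa [hcast, ← le_div_iff₀ hceil0]
  · rw [hcast, ← div_lt_iff₀ hceil0]
    exact Nat.lt_floor_add_one _

theorem exists_uniform_forall_isHittingSet_log_le {k : ℕ} (hk : 120 ≤ log k) :
    ∃ s : ℕ, 3 ≤ s ∧ s ≤ k ∧ ∃ S : Fin k → Finset (Fin k), (∀ i, #(S i) = s) ∧
      ∀ H, IsHittingSet S H → (k : ℝ) * (log k - 4 * log (log k)) ≤ #H * ((s : ℝ) - 2) := by
  have hk0 : (0 : ℝ) < k := Nat.cast_pos.2 (Nat.pos_of_ne_zero fun h ↦ by norm_num [h] at hk)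
  have hexp : exp (log k) = k := exp_log hk0
  have hloglog : 0 ≤ log (log k) := log_nonneg (by linarith)
  obtain ⟨s, h, hs, hsh, hh, hE, hlt⟩ := exists_nat_parameters (k := k) (L := log k)
    (B := log k - 4 * log (log k)) (by linarith) ((pow_four_le_exp hk).trans_eq hexp)
    (sub_nonneg.2 (four_mul_log_le hk)) (by linarith)
  have hunion : h * log k < k * exp (-(log k - 4 * log (log k) + 2)) :=
    calc h * log k ≤ log k ^ 2 * log k := by gcongr
      _ = log k ^ 3 := by ring
      _ < exp (log k) * exp (-(log k - 4 * log (log k) + 2)) :=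
        pow_three_lt_exp_mul_exp_neg (by linarith)
      _ = k * exp (-(log k - 4 * log (log k) + 2)) := by rw [hexp]
  obtain ⟨S, hS, hhit⟩ := exists_uniform_forall_isHittingSet_lt_card (ι := Fin k) (α := Fin k)
    (s := s) (h := h) (by simpa using le_of_add_le_right hsh)
    (by simpa only [Fintype.card_fin] using choose_mul_choose_sub_choose_pow_lt hsh hE hunion)
  refine ⟨s, hs, le_of_add_le_left hsh, S, hS, fun H hH ↦ hlt.le.trans ?_⟩
  have hs3 : (3 : ℝ) ≤ s := by exact_mod_cast hs
  gcongr
  · linarith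
  · exact_mod_cast hhit H hH

/-- there exist `s`-uniform set systems with `k` sets on a ground set
of size `k` in which every hitting set `H` satisfies
`|H| · (s − 2) ≥ k · (ln k − C · ln ln k)`. -/
theorem stmt16 :
    ∃ C : ℝ, 0 < C ∧ ∃ k₀ : ℕ, ∀ k : ℕ, k₀ ≤ k →
      ∃ s : ℕ, 3 ≤ s ∧ s ≤ k ∧
        ∃ Sets : Fin k → Finset (Fin k),
          (∀ i, (Sets i).card = s) ∧
          ∀ H : Finset (Fin k), (∀ i, (H ∩ Sets i).Nonempty) →
            (k : ℝ) * (Real.log k - C * Real.log (Real.log k)) ≤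
              (H.card : ℝ) * ((s : ℝ) - 2) := by
  refine ⟨4, by norm_num, ⌈exp 120⌉₊, fun k hk ↦ ?_⟩
  have hk' : exp 120 ≤ k := Nat.ceil_le.1 hk
  exact exists_uniform_forall_isHittingSet_log_le
    ((le_log_iff_exp_le ((exp_pos 120).trans_le hk')).2 hk')
end
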